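/- Let Y ⊂ ℙⁿ be a hypersurface of degree d whose only singularity is a point y of multiplicity m, with (Y, y) general. If d < m + n − 2, then the variety Σ of lines in Y through y is irreducible of dimension m + n − 2 − d ≥ 1. -/

import Mathlib

open MvPolynomial

noncomputable section

/-- An (affine) algebraic subset of `ℂ^ι`: the common zero locus of a set of polynomials. -/
def IsAlgSet {ι : Type*} (S : Set (ι → ℂ)) : Prop :=
  ∃ T : Set (MvPolynomial ι ℂ), S = {x | ∀ p ∈ T, eval x p = 0}

/-- Irreducibility of a set in the Zariski sense. -/
def AlgIrreducible {ι : Type*} (S : Set (ι → ℂ)) : Prop :=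
  S.Nonempty ∧ ∀ A B : Set (ι → ℂ), IsAlgSet A → IsAlgSet B →
    S ⊆ A ∪ B → S ⊆ A ∨ S ⊆ B

/-- Krull dimension of a set, via chains of irreducible algebraic subsets. -/
def algDim {ι : Type*} (S : Set (ι → ℂ)) : WithBot ℕ∞ :=
  Order.krullDim {T : Set (ι → ℂ) // IsAlgSet T ∧ AlgIrreducible T ∧ T ⊆ S}

/-- A polynomial function on a complex vector space. -/
def IsPolynomialFun {M : Type*} [AddCommGroup M] [Module ℂ M] (g : M → ℂ) : Prop :=
  ∃ (k : ℕ) (l : Fin k → (M →ₗ[ℂ] ℂ)) (p : MvPolynomial (Fin k) ℂ),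
    ∀ m, g m = eval (fun i => l i m) p

/-- A Zariski-open subset of a complex vector space: the complement of a common zero
locus of polynomial functions. -/
def IsZariskiOpen {M : Type*} [AddCommGroup M] [Module ℂ M] (U : Set M) : Prop :=
  ∃ T : Set (M → ℂ), (∀ g ∈ T, IsPolynomialFun g) ∧ Uᶜ = {m | ∀ g ∈ T, g m = 0}

set_option synthInstance.maxHeartbeats 1000000

set_option linter.unusedSectionVars false

section psi
variable {σ : Type*} [Fintype σ] [DecidableEq σ] {B : Type*} [CommRing B]

lemma deg_of_mem {e : ℕ} {v : MvPolynomial σ B} (hv : v.IsHomogeneous e) {μ : σ →₀ ℕ}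
    (hμ : μ ∈ v.support) : μ.degree = e := by
  have := hv (mem_support_iff.1 hμ)
  have h2 := DFunLike.congr_fun (Finsupp.degree_eq_weight_one (R := ℕ) (σ := σ)) μ
  exact h2.trans this

def psiMon (f : σ → MvPolynomial σ B) (a : σ → ℕ) (μ : σ →₀ ℕ) : MvPolynomial σ B :=
  ∏ j, (X j ^ (μ j % a j) * f j ^ (μ j / a j))

def psi (f : σ → MvPolynomial σ B) (a : σ → ℕ) :
    MvPolynomial σ B →ₗ[B] MvPolynomial σ B :=
  (basisMonomials σ B).constr B (psiMon f a)

lemma psi_monomial (f : σ → MvPolynomial σ B) (a : σ → ℕ) (μ : σ →₀ ℕ) (b : B) :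
    psi f a (monomial μ b) = b • psiMon f a μ := by
  have h1 : (monomial μ b : MvPolynomial σ B) = b • basisMonomials σ B μ := by
    simp [smul_monomial]
  rw [h1, map_smul, psi, Module.Basis.constr_basis]

lemma psiMon_add (f : σ → MvPolynomial σ B) (a : σ → ℕ) (ha : ∀ j, 1 ≤ a j) (i : σ) (μ : σ →₀ ℕ) :
    psiMon f a (Finsupp.single i (a i) + μ) = f i * psiMon f a μ := by
  unfold psiMon
  rw [← Finset.mul_prod_erase _ _ (Finset.mem_univ i), ← Finset.mul_prod_erase (a := i) _ _ (Finset.mem_univ i),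
    ← mul_assoc]
  congr 1
  · have h1 : (a i + μ i) / a i = μ i / a i + 1 := by
      rw [Nat.add_div_left _ (ha i)]
    simp only [Finsupp.add_apply, Finsupp.single_eq_same, Nat.add_mod_left, h1]
    ring
  · apply Finset.prod_congr rfl
    intro j hj
    have : i ≠ j := by rintro rfl; simp at hj
    simp [this]

lemma psi_mul (f : σ → MvPolynomial σ B) (a : σ → ℕ) (ha : ∀ j, 1 ≤ a j) (i : σ)
    (v : MvPolynomial σ B) : psi f a (X i ^ a i * v) = f i * psi f a v := by
  induction v using MvPolynomial.induction_on' with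
  | monomial μ b =>
    rw [X_pow_eq_monomial, monomial_mul, one_mul, psi_monomial, psi_monomial, psiMon_add f a ha,
      mul_smul_comm]
  | add p q hp hq => rw [mul_add, map_add, hp, hq, map_add, mul_add]

lemma psiMon_hom (f : σ → MvPolynomial σ B) (a : σ → ℕ) (hf : ∀ j, (f j).IsHomogeneous (a j))
    (μ : σ →₀ ℕ) : (psiMon f a μ).IsHomogeneous μ.degree := by
  have : μ.degree = ∑ j, (1 * (μ j % a j) + a j * (μ j / a j)) := by
    rw [Finsupp.degree_eq_sum]
    exact Finset.sum_congr rfl fun j _ => by rw [one_mul, Nat.mod_add_div]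
  rw [this]
  apply IsHomogeneous.prod
  intro j _
  exact ((isHomogeneous_X _ _).pow _).mul ((hf j).pow _)

lemma psi_hom (f : σ → MvPolynomial σ B) (a : σ → ℕ) (hf : ∀ j, (f j).IsHomogeneous (a j))
    {e : ℕ} {v : MvPolynomial σ B} (hv : v.IsHomogeneous e) : (psi f a v).IsHomogeneous e := by
  rw [v.as_sum, map_sum]
  apply IsHomogeneous.sum
  intro μ hμ
  rw [psi_monomial]
  have : μ.degree = e := deg_of_mem hv hμ
  rw [← this]
  exact (homogeneousSubmodule σ B _).smul_mem _ (psiMon_hom f a hf μ)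

lemma psi_map {B' : Type*} [CommRing B'] (φ : B →+* B') (f : σ → MvPolynomial σ B) (a : σ → ℕ)
    (v : MvPolynomial σ B) :
    map φ (psi f a v) = psi (fun j => map φ (f j)) a (map φ v) := by
  induction v using MvPolynomial.induction_on' with
  | monomial μ b =>
    rw [map_monomial, psi_monomial, psi_monomial, smul_eq_C_mul, smul_eq_C_mul, map_mul, map_C]
    congr 1
    simp [psiMon, map_prod]
  | add p q hp hq => simp [hp, hq]

/-- graded surjectivity -/
def Sur (f : σ → MvPolynomial σ B) (a : σ → ℕ) (e : ℕ) : Prop :=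
  homogeneousSubmodule σ B e ≤ (homogeneousSubmodule σ B e).map (psi f a)

lemma sur_mul (f : σ → MvPolynomial σ B) (a : σ → ℕ) (ha : ∀ j, 1 ≤ a j) (i : σ) {e : ℕ}
    {u : MvPolynomial σ B} (hu : u ∈ (homogeneousSubmodule σ B e).map (psi f a)) :
    f i * u ∈ (homogeneousSubmodule σ B (a i + e)).map (psi f a) := by
  obtain ⟨v, hv, rfl⟩ := hu
  refine ⟨X i ^ a i * v, ?_, psi_mul f a ha i v⟩
  have := ((isHomogeneous_X B i).pow (a i)).mul hv
  simpa using this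

lemma sur_of_monomials (f : σ → MvPolynomial σ B) (a : σ → ℕ) (e : ℕ)
    (h : ∀ μ : σ →₀ ℕ, μ.degree = e → monomial μ 1 ∈ (homogeneousSubmodule σ B e).map (psi f a)) :
    Sur f a e := by
  intro v hv
  rw [v.as_sum]
  apply Submodule.sum_mem
  intro μ hμ
  have h1 : (monomial μ (coeff μ v) : MvPolynomial σ B) = coeff μ v • monomial μ 1 := by
    simp [smul_monomial]
  rw [h1]
  apply Submodule.smul_mem
  apply h
  exact deg_of_mem hv hμ

lemma exists_ge_of_degree (a : σ → ℕ) (μ : σ →₀ ℕ) (h : ∑ j, (a j - 1) < μ.degree) :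
    ∃ i ν, μ = Finsupp.single i (a i) + ν := by
  have : ∃ i, a i ≤ μ i := by
    by_contra! hc
    rw [Finsupp.degree_eq_sum] at h
    have := Finset.sum_le_sum (s := Finset.univ) (f := fun j => μ j) (g := fun j => a j - 1)
      (fun j _ => by have := hc j; omega)
    omega
  obtain ⟨i, hi⟩ := this
  refine ⟨i, μ - Finsupp.single i (a i), ?_⟩
  rw [add_tsub_cancel_of_le]
  simpa using hi

lemma exists_split (μ : σ →₀ ℕ) (k : ℕ) (h : k ≤ μ.degree) :
    ∃ μ₁ μ₂, μ = μ₁ + μ₂ ∧ μ₁.degree = k := by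
  induction k with
  | zero => exact ⟨0, μ, by simp, by simp⟩
  | succ k ih =>
    obtain ⟨μ₁, μ₂, rfl, h1⟩ := ih (by omega)
    have : ∃ i, μ₂ i ≠ 0 := by
      by_contra! hc
      have : μ₂ = 0 := by ext i; simpa using hc i
      subst this
      simp at h; omega
    obtain ⟨i, hi⟩ := this
    refine ⟨μ₁ + Finsupp.single i 1, μ₂ - Finsupp.single i 1, ?_, by simp [h1]⟩
    rw [add_assoc, add_tsub_cancel_of_le]
    simpa using Nat.one_le_iff_ne_zero.2 hi

lemma sur_all (f : σ → MvPolynomial σ B) (a : σ → ℕ) (ha : ∀ j, 1 ≤ a j)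
    (hf : ∀ j, (f j).IsHomogeneous (a j))
    (h : ∀ e ≤ ∑ j, (a j - 1) + 1, Sur f a e) (e : ℕ) : Sur f a e := by
  induction e using Nat.strong_induction_on with
  | _ e ih =>
  by_cases he : e ≤ ∑ j, (a j - 1) + 1
  · exact h e he
  push Not at he
  apply sur_of_monomials
  intro μ hμ
  obtain ⟨μ₁, μ₂, rfl, h1⟩ := exists_split μ (∑ j, (a j - 1) + 1) (by omega)
  have h2 : (monomial μ₁ 1 : MvPolynomial σ B) ∈ homogeneousSubmodule σ B (∑ j, (a j - 1) + 1) := by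
    rw [mem_homogeneousSubmodule]; exact isHomogeneous_monomial _ h1
  obtain ⟨v, hv, hv'⟩ := h _ le_rfl h2
  have h3 : (monomial (μ₁ + μ₂) 1 : MvPolynomial σ B) = monomial μ₁ 1 * monomial μ₂ 1 := by
    rw [monomial_mul, one_mul]
  rw [h3, ← hv', v.as_sum, map_sum, Finset.sum_mul]
  apply Submodule.sum_mem
  intro ν hν
  have hνd : ν.degree = ∑ j, (a j - 1) + 1 := deg_of_mem hv hν
  rw [psi_monomial, smul_mul_assoc]
  apply Submodule.smul_mem
  obtain ⟨i, ν', rfl⟩ := exists_ge_of_degree a ν (by omega)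
  rw [psiMon_add f a ha, mul_assoc]
  have hd : a i + ν'.degree = ∑ j, (a j - 1) + 1 := by simpa using hνd
  have hμ' : μ₁.degree + μ₂.degree = e := by simpa using hμ
  have h4 : a i + (ν'.degree + μ₂.degree) = e := by omega
  have h5 := sur_mul f a ha i (ih (ν'.degree + μ₂.degree) (by have := ha i; omega)
    ((psiMon_hom f a hf ν').mul (isHomogeneous_monomial (1 : B) (rfl : μ₂.degree = _))))
  rw [h4] at h5
  exact h5

abbrev Dg (σ : Type*) [Fintype σ] [DecidableEq σ] (e : ℕ) : Type _ :=
  {μ : σ →₀ ℕ // μ ∈ Finset.finsuppAntidiag (Finset.univ : Finset σ) e}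

lemma mem_Dg {μ : σ →₀ ℕ} {e : ℕ} :
    μ ∈ Finset.finsuppAntidiag (Finset.univ : Finset σ) e ↔ μ.degree = e := by
  rw [Finset.mem_finsuppAntidiag, Finsupp.degree_eq_sum]; simp

lemma hom_eq_sum {e : ℕ} {v : MvPolynomial σ B} (hv : v.IsHomogeneous e) :
    v = ∑ ν : Dg σ e, coeff ν.1 v • (monomial ν.1 1 : MvPolynomial σ B) := by
  rw [Finset.univ_eq_attach, Finset.sum_attach (Finset.finsuppAntidiag (Finset.univ : Finset σ) e)
    (fun ν => coeff ν v • (monomial ν 1 : MvPolynomial σ B))]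
  conv_lhs => rw [v.as_sum]
  simp only [smul_monomial, smul_eq_mul, mul_one]
  apply Finset.sum_subset
  · intro μ hμ
    rw [mem_Dg]
    exact deg_of_mem hv hμ
  · intro μ _ h
    rw [notMem_support_iff.1 h]; simp

def Mat (f : σ → MvPolynomial σ B) (a : σ → ℕ) (e : ℕ) : Matrix (Dg σ e) (Dg σ e) B :=
  fun μ ν => coeff ν.1 (psiMon f a μ.1)

lemma Mat_map {B' : Type*} [CommRing B'] (φ : B →+* B') (f : σ → MvPolynomial σ B) (a : σ → ℕ)
    (e : ℕ) : φ.mapMatrix (Mat f a e) = Mat (fun j => map φ (f j)) a e := by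
  ext μ ν
  simp only [RingHom.mapMatrix_apply, Matrix.map_apply, Mat]
  rw [← coeff_map]
  congr 1
  simp [psiMon, map_prod]

lemma det_smul_mem (f : σ → MvPolynomial σ B) (a : σ → ℕ) (hf : ∀ j, (f j).IsHomogeneous (a j))
    (e : ℕ) (v : MvPolynomial σ B) (hv : v.IsHomogeneous e) :
    (Mat f a e).det • v ∈ (homogeneousSubmodule σ B e).map (psi f a) := by
  rw [hom_eq_sum hv, Finset.smul_sum]
  apply Submodule.sum_mem
  intro ν _
  rw [smul_comm]
  apply Submodule.smul_mem
  have key : (Mat f a e).det • (monomial ν.1 1 : MvPolynomial σ B) =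
      ∑ μ : Dg σ e, (Mat f a e).adjugate ν μ • psiMon f a μ.1 := by
    have h1 : ∀ μ : Dg σ e, psiMon f a μ.1 =
        ∑ l : Dg σ e, Mat f a e μ l • (monomial l.1 1 : MvPolynomial σ B) := fun μ =>
      hom_eq_sum (by have := psiMon_hom f a hf μ.1; rwa [mem_Dg.1 μ.2] at this)
    conv_rhs => enter [2, μ]; rw [h1, Finset.smul_sum]
    rw [Finset.sum_comm]
    simp_rw [smul_smul, ← Finset.sum_smul]
    have h2 := Matrix.adjugate_mul (Mat f a e)
    have h3 : ∀ l, ∑ μ, (Mat f a e).adjugate ν μ * Mat f a e μ l =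
        ((Mat f a e).det • (1 : Matrix (Dg σ e) (Dg σ e) B)) ν l := fun l => by
      rw [← h2, Matrix.mul_apply]
    simp_rw [h3, Matrix.smul_apply, Matrix.one_apply]
    simp
  rw [key]
  apply Submodule.sum_mem
  intro μ _
  apply Submodule.smul_mem
  refine ⟨monomial μ.1 1, isHomogeneous_monomial _ (mem_Dg.1 μ.2), ?_⟩
  rw [psi_monomial, one_smul]

lemma det_isUnit_of_sur (f : σ → MvPolynomial σ B) (a : σ → ℕ) (e : ℕ) (h : Sur f a e) :
    IsUnit (Mat f a e).det := by
  have : ∀ ν : Dg σ e, ∃ v : MvPolynomial σ B, v.IsHomogeneous e ∧ psi f a v = monomial ν.1 1 :=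
    fun ν => h (show monomial ν.1 1 ∈ homogeneousSubmodule σ B e from isHomogeneous_monomial _ (mem_Dg.1 ν.2))
  choose v hv hv' using this
  let V : Matrix (Dg σ e) (Dg σ e) B := fun ν μ => coeff μ.1 (v ν)
  have hVM : V * Mat f a e = 1 := by
    ext ν l
    have h1 := congrArg (coeff l.1) (hv' ν)
    have h0 : psi f a (v ν) = ∑ μ : Dg σ e, coeff μ.1 (v ν) • psi f a (monomial μ.1 1) := by
      conv_lhs => rw [hom_eq_sum (hv ν), map_sum]
      simp only [map_smul]
    rw [h0] at h1
    simp only [psi_monomial, one_smul, coeff_sum, coeff_smul, smul_eq_mul,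
      coeff_monomial] at h1
    rw [Matrix.mul_apply]
    simp only [V, Mat, Matrix.one_apply]
    rw [h1]
    by_cases hνl : ν = l
    · rw [if_pos hνl, if_pos (congrArg _ hνl)]
    · rw [if_neg hνl, if_neg (fun h => hνl (Subtype.ext h))]
  have := congrArg Matrix.det hVM
  rw [Matrix.det_mul, Matrix.det_one] at this
  exact IsUnit.of_mul_eq_one_right _ this

lemma sur_of_det (f : σ → MvPolynomial σ B) (a : σ → ℕ) (hf : ∀ j, (f j).IsHomogeneous (a j))
    (e : ℕ) (h : IsUnit (Mat f a e).det) : Sur f a e := by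
  intro v hv
  obtain ⟨u, hu⟩ := h
  have := det_smul_mem f a hf e v hv
  rw [← hu] at this
  have h2 := Submodule.smul_mem _ (↑u⁻¹ : B) this
  rwa [smul_smul, Units.inv_mul, one_smul] at h2

lemma psi_surj (f : σ → MvPolynomial σ B) (a : σ → ℕ) (h : ∀ e, Sur f a e) :
    Function.Surjective (psi f a) := by
  intro v
  have : v ∈ LinearMap.range (psi f a) := by
    rw [← sum_homogeneousComponent v]
    apply Submodule.sum_mem
    intro e _
    obtain ⟨u, _, hu⟩ := h e (homogeneousComponent_mem e v)
    exact ⟨u, hu⟩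
  exact this

lemma psi_inj [Nontrivial B] (f : σ → MvPolynomial σ B) (a : σ → ℕ) (hf : ∀ j, (f j).IsHomogeneous (a j))
    (h : ∀ e, Sur f a e) : Function.Injective (psi f a) := by
  rw [injective_iff_map_eq_zero]
  have key : ∀ e (v : MvPolynomial σ B), v.IsHomogeneous e → psi f a v = 0 → v = 0 := by
    intro e v hv h0
    have hM := det_isUnit_of_sur f a e (h e)
    have h1 : Matrix.vecMul (fun μ : Dg σ e => coeff μ.1 v) (Mat f a e) = 0 := by
      ext l
      have h1 := congrArg (coeff l.1) h0
      have h0 : psi f a v = ∑ μ : Dg σ e, coeff μ.1 v • psi f a (monomial μ.1 1) := by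
        conv_lhs => rw [hom_eq_sum hv, map_sum]
        simp only [map_smul]
      rw [h0] at h1
      simp only [psi_monomial, one_smul, coeff_sum, coeff_smul, smul_eq_mul,
        coeff_zero] at h1
      simpa [Matrix.vecMul, dotProduct, Mat] using h1
    have h2 : (fun μ : Dg σ e => coeff μ.1 v) = 0 := by
      have := congrArg (fun x => Matrix.vecMul x (Mat f a e)⁻¹) h1
      simpa [Matrix.vecMul_vecMul, Matrix.mul_nonsing_inv _ hM] using this
    rw [hom_eq_sum hv]
    apply Finset.sum_eq_zero
    intro ν _
    have := congrFun h2 ν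
    simp only [Pi.zero_apply] at this
    rw [this, zero_smul]
  intro v hv
  have h1 : ∀ e, homogeneousComponent e v = 0 := by
    intro e
    apply key e _ (homogeneousComponent_isHomogeneous e v)
    have h2 : homogeneousComponent e (psi f a v) = psi f a (homogeneousComponent e v) := by
      conv_lhs => rw [← sum_homogeneousComponent v, map_sum, map_sum]
      by_cases he : e ∈ Finset.range (v.totalDegree + 1)
      · rw [Finset.sum_eq_single e]
        · exact (homogeneousComponent_of_mem (psi_hom f a hf (homogeneousComponent_isHomogeneous e v))).trans (if_pos rfl)
        · intro b _ hb
          rw [homogeneousComponent_of_mem (psi_hom f a hf (homogeneousComponent_isHomogeneous b v)), if_neg hb.symm]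
        · intro h; exact absurd he h
      · rw [homogeneousComponent_eq_zero e v (by simpa using he), map_zero]
        apply Finset.sum_eq_zero
        intro b hb
        rw [homogeneousComponent_of_mem (psi_hom f a hf (homogeneousComponent_isHomogeneous b v)), if_neg]
        rintro rfl; exact he hb
    rw [← h2, hv, map_zero]
  rw [← sum_homogeneousComponent v]
  exact Finset.sum_eq_zero fun e _ => h1 e
end psi

set_option linter.unusedSectionVars false

section red
variable {σ : Type*} [Fintype σ] [DecidableEq σ] {B : Type*} [CommRing B]
  (t : σ → Prop) [DecidablePred t]

abbrev rho (B : Type*) [CommRing B] : MvPolynomial {j : σ // t j} B →ₐ[B] MvPolynomial σ B :=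
  rename Subtype.val

def yMon {a : σ → ℕ} (α : ∀ j, Fin (a j)) : MvPolynomial σ B := ∏ j, X j ^ (α j : ℕ)

def II (f : σ → MvPolynomial σ B) : Ideal (MvPolynomial σ B) :=
  Ideal.span (Set.range fun j : {j // ¬ t j} => f j)

lemma psiMon_mem (f : σ → MvPolynomial σ B) (a : σ → ℕ) (ha : ∀ j, 1 ≤ a j)
    (μ : σ →₀ ℕ) (i : σ) (hi : ¬ t i) (h : a i ≤ μ i) : psiMon f a μ ∈ II t f := by
  have : μ = Finsupp.single i (a i) + (μ - Finsupp.single i (a i)) := by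
    rw [add_tsub_cancel_of_le]
    simpa using h
  rw [this, psiMon_add f a ha]
  exact Ideal.mul_mem_right _ _ (Ideal.subset_span ⟨⟨i, hi⟩, rfl⟩)

lemma psi_red (f : σ → MvPolynomial σ B) (a : σ → ℕ) (ha : ∀ j, 1 ≤ a j)
    (ht : ∀ j, t j → f j = X j ∧ a j = 1) (v : MvPolynomial σ B) :
    ∃ b : (∀ j, Fin (a j)) → MvPolynomial {j : σ // t j} B,
      psi f a v - ∑ α, rho t B (b α) * yMon α ∈ II t f := by
  induction v using MvPolynomial.induction_on' with
  | monomial μ c =>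
    by_cases h : ∃ i, ¬ t i ∧ a i ≤ μ i
    · obtain ⟨i, hi, h⟩ := h
      refine ⟨0, ?_⟩
      simp only [Pi.zero_apply, map_zero, zero_mul, Finset.sum_const_zero, sub_zero]
      rw [psi_monomial, smul_eq_C_mul]
      exact Ideal.mul_mem_left _ _ (psiMon_mem t f a ha μ i hi h)
    · push Not at h
      let α : ∀ j, Fin (a j) := fun j => ⟨μ j % a j, Nat.mod_lt _ (ha j)⟩
      refine ⟨Pi.single α (C c * ∏ j : {j // t j}, X j ^ μ j), ?_⟩
      rw [Finset.sum_eq_single α]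
      · rw [Pi.single_eq_same, psi_monomial, smul_eq_C_mul]
        have h1 : psiMon f a μ = (∏ j : {j // t j}, X j.1 ^ μ j) * yMon α := by
          unfold psiMon yMon
          rw [Finset.prod_mul_distrib, mul_comm]
          congr 1
          rw [← Fintype.prod_subtype_mul_prod_subtype t]
          have h2 : (∏ i : {x // ¬ t x}, f i.1 ^ (μ i.1 / a i.1)) = 1 := by
            apply Finset.prod_eq_one
            intro i _
            rw [Nat.div_eq_of_lt (h i.1 i.2), pow_zero]
          rw [h2, mul_one]
          apply Finset.prod_congr rfl
          intro i _
          rw [(ht i.1 i.2).1, (ht i.1 i.2).2, Nat.div_one]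
        rw [h1]
        simp [map_prod, mul_assoc]
      · intro β _ hβ
        rw [Pi.single_eq_of_ne hβ]; simp
      · simp
  | add p q hp hq =>
    obtain ⟨b, hb⟩ := hp
    obtain ⟨b', hb'⟩ := hq
    refine ⟨b + b', ?_⟩
    have := Ideal.add_mem _ hb hb'
    convert this using 1
    simp only [map_add, Pi.add_apply, add_mul, Finset.sum_add_distrib]
    ring

lemma psi_rho (f : σ → MvPolynomial σ B) (a : σ → ℕ) (ha : ∀ j, 1 ≤ a j)
    (ht : ∀ j, t j → f j = X j ∧ a j = 1) (g : MvPolynomial {j : σ // t j} B)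
    (v : MvPolynomial σ B) : psi f a (rho t B g * v) = rho t B g * psi f a v := by
  induction g using MvPolynomial.induction_on generalizing v with
  | C c => simp only [rename_C, ← smul_eq_C_mul, map_smul]
  | add p q hp hq => simp only [map_add, add_mul, hp, hq]
  | mul_X p i hp =>
    have := psi_mul f a ha i.1 v
    rw [(ht i.1 i.2).1, (ht i.1 i.2).2, pow_one] at this
    simp only [map_mul, rename_X, mul_assoc, hp, this]

/-- all reduced coefficients vanish -/
def Irr (a : σ → ℕ) (v : MvPolynomial σ B) : Prop :=
  ∀ μ : σ →₀ ℕ, (∀ j, ¬ t j → μ j < a j) → coeff μ v = 0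

lemma psi_mem_of_irr (f : σ → MvPolynomial σ B) (a : σ → ℕ) (ha : ∀ j, 1 ≤ a j)
    (v : MvPolynomial σ B) (hv : Irr t a v) : psi f a v ∈ II t f := by
  rw [v.as_sum, map_sum]
  apply Ideal.sum_mem
  intro μ hμ
  have : ∃ i, ¬ t i ∧ a i ≤ μ i := by
    by_contra! hc
    exact (mem_support_iff.1 hμ) (hv μ hc)
  obtain ⟨i, hi, h⟩ := this
  rw [psi_monomial, smul_eq_C_mul]
  exact Ideal.mul_mem_left _ _ (psiMon_mem t f a ha μ i hi h)

lemma exists_irr (f : σ → MvPolynomial σ B) (a : σ → ℕ) (ha : ∀ j, 1 ≤ a j)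
    (hs : Function.Surjective (psi f a)) (u : MvPolynomial σ B) (hu : u ∈ II t f) :
    ∃ v, Irr t a v ∧ psi f a v = u := by
  rw [II, Ideal.mem_span_range_iff_exists_fun] at hu
  obtain ⟨c, rfl⟩ := hu
  choose v hv using fun i => hs (c i)
  refine ⟨∑ i, X i.1 ^ a i.1 * v i, ?_, ?_⟩
  · intro μ hμ
    rw [coeff_sum]
    apply Finset.sum_eq_zero
    intro i _
    rw [X_pow_eq_monomial, coeff_monomial_mul', if_neg]
    intro hle
    have := hle i.1
    simp at this
    have := hμ i.1 i.2
    omega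
  · rw [map_sum]
    apply Finset.sum_congr rfl
    intro i _
    rw [psi_mul f a ha, hv, mul_comm]

lemma irr_of_mul [IsDomain B] (a : σ → ℕ) (g : MvPolynomial {j : σ // t j} B) (hg : g ≠ 0)
    (v : MvPolynomial σ B) (h : Irr t a (rho t B g * v)) : Irr t a v := by
  have hsup : ∀ (μ : σ →₀ ℕ) (w : MvPolynomial σ B), coeff μ (rho t B g * w) ≠ 0 →
      ∃ μ₂, coeff μ₂ w ≠ 0 ∧ ∀ j, ¬ t j → μ j = μ₂ j := by
    intro μ w hne
    have h1 := support_mul _ _ (mem_support_iff.2 hne)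
    rw [Finset.mem_add] at h1
    obtain ⟨μ₁, h1, μ₂, h2, rfl⟩ := h1
    refine ⟨μ₂, mem_support_iff.1 h2, ?_⟩
    intro j hj
    obtain ⟨u, rfl, _⟩ := coeff_rename_ne_zero _ _ _ (mem_support_iff.1 h1)
    rw [Finsupp.add_apply, Finsupp.mapDomain_of_notMem_range, zero_add]
    rintro ⟨x, rfl⟩
    exact hj x.2
  classical
  let v0 : MvPolynomial σ B := ∑ μ ∈ v.support.filter (fun μ => ∀ j, ¬ t j → μ j < a j),
    monomial μ (coeff μ v)
  have hv0 : ∀ μ, coeff μ v0 = if (∀ j, ¬ t j → μ j < a j) then coeff μ v else 0 := by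
    intro μ
    simp only [v0, coeff_sum, coeff_monomial]
    rw [Finset.sum_ite_eq']
    by_cases h1 : ∀ j, ¬ t j → μ j < a j
    · by_cases h2 : coeff μ v = 0 <;> simp [h1, h2]
    · rw [if_neg h1, if_neg]
      simp only [Finset.mem_filter, not_and]
      exact fun _ => h1
  have h0 : rho t B g * v0 = 0 := by
    ext μ
    rw [coeff_zero]
    by_contra hne
    obtain ⟨μ₂, h2, h3⟩ := hsup μ v0 hne
    rw [hv0] at h2
    have h4 : ∀ j, ¬ t j → μ₂ j < a j := by
      by_contra hc; rw [if_neg hc] at h2; exact h2 rfl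
    have h5 : ∀ j, ¬ t j → μ j < a j := fun j hj => by rw [h3 j hj]; exact h4 j hj
    have h6 := h μ h5
    have h7 : coeff μ (rho t B g * (v - v0)) ≠ 0 := by
      rw [mul_sub, coeff_sub, h6, zero_sub]; exact neg_ne_zero.2 hne
    obtain ⟨μ₃, h8, h9⟩ := hsup μ (v - v0) h7
    rw [coeff_sub, hv0, if_pos (fun j hj => by rw [← h9 j hj]; exact h5 j hj), sub_self] at h8
    exact h8 rfl
  have hρ : rho t B g ≠ 0 := by
    intro h; exact hg (rename_injective _ Subtype.val_injective (by rw [map_zero]; exact h))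
  have h1 := (mul_eq_zero.1 h0).resolve_left hρ
  intro μ hμ
  have := hv0 μ
  rw [if_pos hμ, h1, coeff_zero] at this
  exact this.symm

lemma reg [IsDomain B] (f : σ → MvPolynomial σ B) (a : σ → ℕ) (ha : ∀ j, 1 ≤ a j)
    (hf : ∀ j, (f j).IsHomogeneous (a j))
    (ht : ∀ j, t j → f j = X j ∧ a j = 1) (hs : ∀ e, Sur f a e)
    (g : MvPolynomial {j : σ // t j} B) (hg : g ≠ 0)
    (u : MvPolynomial σ B) (h : rho t B g * u ∈ II t f) : u ∈ II t f := by
  obtain ⟨v, rfl⟩ := psi_surj f a hs u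
  rw [← psi_rho t f a ha ht] at h
  obtain ⟨v', hv', h'⟩ := exists_irr t f a ha (psi_surj f a hs) _ h
  have := psi_inj f a hf hs h'
  subst this
  exact psi_mem_of_irr t f a ha v (irr_of_mul t a g hg v hv')
end red

section domain
open scoped Polynomial
variable {R E : Type*} [CommRing R] [IsDomain R] [IsIntegrallyClosed R] [CommRing E] [Algebra R E]
  [Nontrivial E]

lemma monic_dvd_map {R K : Type*} [CommRing R] [CommRing K] (g : R →+* K)
    (hg : Function.Injective g) (P q : R[X]) (hP : P.Monic) : P ∣ q ↔ P.map g ∣ q.map g := by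
  rw [← Polynomial.modByMonic_eq_zero_iff_dvd hP,
    ← Polynomial.modByMonic_eq_zero_iff_dvd (hP.map g), ← Polynomial.map_modByMonic g hP,
    Polynomial.map_eq_zero_iff hg]

lemma dvd_of_aeval_zero (hreg : ∀ (g : R) (u : E), g ≠ 0 → g • u = 0 → u = 0)
    (P : R[X]) (hP : P.Monic) (hirr : Irreducible P) (w : E) (hw : Polynomial.aeval w P = 0)
    (q : R[X]) (hq : Polynomial.aeval w q = 0) : P ∣ q := by
  let K := FractionRing R
  have hirr' := (hP.irreducible_iff_irreducible_map_fraction_map (K := K)).1 hirr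
  rw [monic_dvd_map (algebraMap R K) (IsFractionRing.injective R K) _ _ hP]
  by_contra hnd
  have hcop : IsCoprime (P.map (algebraMap R K)) (q.map (algebraMap R K)) :=
    (hirr'.coprime_iff_not_dvd).2 hnd
  obtain ⟨x, y, hxy⟩ := hcop
  obtain ⟨b, hb⟩ := IsLocalization.integerNormalization_map_to_map (nonZeroDivisors R) x
  obtain ⟨b', hb'⟩ := IsLocalization.integerNormalization_map_to_map (nonZeroDivisors R) y
  set x' := IsLocalization.integerNormalization (nonZeroDivisors R) x
  set y' := IsLocalization.integerNormalization (nonZeroDivisors R) y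
  have h1 : Polynomial.C (b' : R) * x' * P + Polynomial.C (b : R) * y' * q = Polynomial.C ((b : R) * b') := by
    apply Polynomial.map_injective _ (IsFractionRing.injective R K)
    simp only [Polynomial.map_add, Polynomial.map_mul, Polynomial.map_C]
    rw [hb, hb', Algebra.smul_def, Algebra.smul_def, Polynomial.algebraMap_apply,
      Polynomial.algebraMap_apply]
    rw [map_mul, Polynomial.C_mul]
    calc _ = Polynomial.C (algebraMap R K b) * Polynomial.C (algebraMap R K b') *
          (x * P.map (algebraMap R K) + y * q.map (algebraMap R K)) := by ring
      _ = _ := by rw [hxy, mul_one]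
  have h2 := congrArg (Polynomial.aeval w) h1
  simp only [map_add, map_mul, hw, hq, mul_zero, add_zero, Polynomial.aeval_C] at h2
  have h3 : ((b : R) * b') • (1 : E) = 0 := by rw [Algebra.smul_def, mul_one, map_mul, ← h2]
  exact one_ne_zero (hreg _ _ (mul_ne_zero (nonZeroDivisors.ne_zero b.2) (nonZeroDivisors.ne_zero b'.2)) h3)

lemma domain_of (hreg : ∀ (g : R) (u : E), g ≠ 0 → g • u = 0 → u = 0)
    {ι : Type*} [Fintype ι] (y : ι → E) (hy : ∀ v, ∃ b : ι → R, v = ∑ i, b i • y i)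
    (P : R[X]) (hP : P.Monic) (hirr : Irreducible P) (hdeg : P.natDegree = Fintype.card ι)
    (w : E) (hw : Polynomial.aeval w P = 0) : IsDomain E := by
  have hdvd := dvd_of_aeval_zero hreg P hP hirr w hw
  have key : ∀ v : E, ∃ (b : R) (q : R[X]), b ≠ 0 ∧ b • v = Polynomial.aeval w q := by
    intro v
    classical
    let F : Option (Fin P.natDegree) → E := fun o => o.elim v (fun i => w ^ (i : ℕ))
    have hnl : ¬ LinearIndependent R F := by
      intro hli
      have h1 := linearIndependent_le_span F hli (Set.range y) (by
        rw [eq_top_iff]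
        intro u _
        obtain ⟨b, rfl⟩ := hy u
        exact Submodule.sum_mem _ fun i _ => Submodule.smul_mem _ _ (Submodule.subset_span ⟨i, rfl⟩))
      have h2 : Fintype.card (Set.range y) ≤ Fintype.card ι := Fintype.card_range_le y
      simp only [Cardinal.mk_fintype, Fintype.card_option, Fintype.card_fin, Nat.cast_le] at h1
      omega
    rw [Fintype.not_linearIndependent_iff] at hnl
    obtain ⟨g, hg, o, ho⟩ := hnl
    rw [Fintype.sum_option] at hg
    simp only [F, Option.elim] at hg
    let q : R[X] := ∑ i : Fin P.natDegree, Polynomial.C (g (some i)) * Polynomial.X ^ (i : ℕ)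
    have hq : Polynomial.aeval w q = ∑ i : Fin P.natDegree, g (some i) • w ^ (i : ℕ) := by
      simp [q, map_sum, Algebra.smul_def]
    have hqc : ∀ i : Fin P.natDegree, q.coeff i = g (some i) := by
      intro i
      simp only [q, Polynomial.finsetSum_coeff, Polynomial.coeff_C_mul, Polynomial.coeff_X_pow]
      rw [Finset.sum_eq_single i]
      · simp
      · intro j _ hj
        rw [if_neg (fun h => hj (Fin.ext h.symm)), mul_zero]
      · simp
    have hqd : q.degree < P.natDegree := by
      apply lt_of_le_of_lt (Polynomial.degree_sum_le _ _)
      rw [Finset.sup_lt_iff (by exact WithBot.bot_lt_coe _)]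
      intro i _
      exact lt_of_le_of_lt (Polynomial.degree_C_mul_X_pow_le _ _) (by exact_mod_cast i.2)
    refine ⟨g none, -q, ?_, ?_⟩
    · intro h0
      rw [h0, zero_smul, zero_add, ← hq] at hg
      have h1 := hdvd q hg
      have h2 : q = 0 := by
        by_contra hne
        have := Polynomial.degree_le_of_dvd h1 hne
        rw [Polynomial.degree_eq_natDegree hP.ne_zero] at this
        exact absurd hqd (not_lt.2 this)
      cases o with
      | none => exact ho h0
      | some i => exact ho (by rw [← hqc, h2, Polynomial.coeff_zero])
    · rw [map_neg, hq]
      exact eq_neg_of_add_eq_zero_left hg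
  have hprime : Prime P := by
    refine ⟨hP.ne_zero, hirr.not_isUnit, ?_⟩
    intro p q hpq
    let K := FractionRing R
    rw [monic_dvd_map (algebraMap R K) (IsFractionRing.injective R K) _ _ hP, monic_dvd_map (algebraMap R K) (IsFractionRing.injective R K) _ _ hP]
    rw [monic_dvd_map (algebraMap R K) (IsFractionRing.injective R K) _ _ hP, Polynomial.map_mul] at hpq
    exact ((hP.irreducible_iff_irreducible_map_fraction_map (K := K)).1 hirr).prime.dvd_or_dvd hpq
  have hnz : NoZeroDivisors E := ⟨by
    intro u v huv
    obtain ⟨b, q, hb, hq⟩ := key u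
    obtain ⟨b', q', hb', hq'⟩ := key v
    have h1 : Polynomial.aeval w (q * q') = 0 := by
      rw [map_mul, ← hq, ← hq', smul_mul_smul_comm, huv, smul_zero]
    rcases hprime.dvd_or_dvd (hdvd _ h1) with ⟨s, hs⟩ | ⟨s, hs⟩
    · left
      apply hreg b u hb
      rw [hq, hs, map_mul, hw, zero_mul]
    · right
      apply hreg b' v hb'
      rw [hq', hs, map_mul, hw, zero_mul]⟩
  exact NoZeroDivisors.to_isDomain E

end domain

lemma krullDim_integral {R E : Type*} [CommRing R] [CommRing E] [Algebra R E]
    [Algebra.IsIntegral R E] (hinj : Function.Injective (algebraMap R E)) :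
    ringKrullDim E = ringKrullDim R := by
  apply le_antisymm
  · apply Order.krullDim_le_of_strictMono (PrimeSpectrum.comap (algebraMap R E))
    intro p q hpq
    have h1 : p.asIdeal < q.asIdeal := hpq
    obtain ⟨x, hx, hx'⟩ := SetLike.exists_of_lt h1
    exact Ideal.comap_lt_comap_of_integral_mem_sdiff h1.le ⟨hx, hx'⟩ (Algebra.IsIntegral.isIntegral x)
  · apply iSup_le
    intro l
    have : FaithfulSMul R E := (faithfulSMul_iff_algebraMap_injective R E).2 hinj
    obtain ⟨P, hP⟩ := Algebra.IsIntegral.comap_surjective R E l.head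
    have : P.asIdeal.LiesOver l.head.asIdeal := ⟨by rw [← hP]; rfl⟩
    obtain ⟨L, hL, _⟩ := Ideal.exists_ltSeries_of_hasGoingUp l P.asIdeal
    rw [← hL]
    exact le_iSup (fun (L : LTSeries (PrimeSpectrum E)) => (L.length : WithBot ℕ∞)) L

set_option linter.unusedSectionVars false

section fac
open scoped Polynomial
variable {B : Type*} [CommRing B]

def uni (e D : ℕ) (x : Fin e × Fin (D+1) → B) : B[X][X] :=
  Polynomial.X ^ e + ∑ i : Fin e,
    Polynomial.C (∑ j : Fin (D+1), Polynomial.C (x (i,j)) * Polynomial.X ^ (j:ℕ)) * Polynomial.X ^ (i:ℕ)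

lemma sum_coeff {B : Type*} [CommRing B] (e : ℕ) (y : Fin e → B) (k : ℕ) :
    (∑ i : Fin e, Polynomial.C (y i) * Polynomial.X ^ (i:ℕ)).coeff k
      = if h : k < e then y ⟨k, h⟩ else 0 := by
  simp only [Polynomial.finsetSum_coeff, Polynomial.coeff_C_mul, Polynomial.coeff_X_pow]
  split_ifs with h
  · rw [Finset.sum_eq_single ⟨k, h⟩]
    · simp
    · intro j _ hj
      rw [if_neg (fun h => hj (Fin.ext h.symm)), mul_zero]
    · simp
  · apply Finset.sum_eq_zero
    intro i _
    rw [if_neg (by have := i.2; omega), mul_zero]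

lemma sum_degree_lt {B : Type*} [CommRing B] (e : ℕ) (y : Fin e → B) :
    (∑ i : Fin e, Polynomial.C (y i) * Polynomial.X ^ (i:ℕ)).degree < (e : WithBot ℕ) := by
  rw [Polynomial.degree_lt_iff_coeff_zero]
  intro k hk
  rw [sum_coeff, dif_neg (by omega)]

lemma uni_monic (e D : ℕ) (x : Fin e × Fin (D+1) → B) : (uni e D x).Monic :=
  Polynomial.monic_X_pow_add (sum_degree_lt e _)

lemma uni_natDegree [Nontrivial B] (e D : ℕ) (x : Fin e × Fin (D+1) → B) :
    (uni e D x).natDegree = e := by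
  unfold uni
  rw [Polynomial.natDegree_add_eq_left_of_degree_lt, Polynomial.natDegree_X_pow]
  rw [Polynomial.degree_X_pow]
  exact sum_degree_lt e _

lemma uni_coeff (e D : ℕ) (x : Fin e × Fin (D+1) → B) (i : Fin e) (j : Fin (D+1)) :
    ((uni e D x).coeff i).coeff j = x (i, j) := by
  unfold uni
  rw [Polynomial.coeff_add, sum_coeff, dif_pos i.2, Polynomial.coeff_X_pow, if_neg (by have := i.2; omega),
    zero_add, sum_coeff, dif_pos j.2]

lemma uni_coeff_natDegree (e D : ℕ) (x : Fin e × Fin (D+1) → B) (i : ℕ) :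
    ((uni e D x).coeff i).natDegree ≤ D := by
  unfold uni
  rw [Polynomial.coeff_add, sum_coeff, Polynomial.coeff_X_pow]
  refine (Polynomial.natDegree_add_le _ _).trans (max_le ?_ ?_)
  · split_ifs <;> simp
  · split_ifs with h
    · rw [Polynomial.natDegree_le_iff_coeff_eq_zero]
      intro k hk
      rw [sum_coeff, dif_neg (by omega)]
    · simp

lemma uni_map {B' : Type*} [CommRing B'] (φ : B →+* B') (e D : ℕ) (x : Fin e × Fin (D+1) → B) :
    (uni e D x).map (Polynomial.mapRingHom φ) = uni e D (fun i => φ (x i)) := by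
  unfold uni
  simp [Polynomial.map_sum]

lemma eq_uni (e D : ℕ) (P : B[X][X]) (hP : P.Monic) (hd : P.natDegree = e)
    (hD : ∀ i, (P.coeff i).natDegree ≤ D) :
    P = uni e D (fun ij => (P.coeff ij.1).coeff ij.2) := by
  ext i j
  unfold uni
  rw [Polynomial.coeff_add, sum_coeff, Polynomial.coeff_X_pow]
  rcases lt_trichotomy i e with h | h | h
  · rw [if_neg h.ne, dif_pos h, zero_add, sum_coeff]
    split_ifs with hj
    · rfl
    · exact Polynomial.coeff_eq_zero_of_natDegree_lt (by have := hD i; omega)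
  · subst h
    rw [if_pos rfl, dif_neg (lt_irrefl _), add_zero, ← hd, hP.coeff_natDegree]
  · rw [if_neg h.ne', dif_neg (by omega), Polynomial.coeff_eq_zero_of_natDegree_lt (p := P) (by omega)]
    simp

lemma mul_coeff_natDegree (D D' : ℕ) (P Q : B[X][X]) (hP : ∀ i, (P.coeff i).natDegree ≤ D)
    (hQ : ∀ i, (Q.coeff i).natDegree ≤ D') (i : ℕ) : ((P * Q).coeff i).natDegree ≤ D + D' := by
  rw [Polynomial.coeff_mul]
  apply Polynomial.natDegree_sum_le_of_forall_le
  intro x _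
  exact Polynomial.natDegree_mul_le.trans (add_le_add (hP _) (hQ _))

abbrev CC (e e' D : ℕ) := MvPolynomial (Fin e × Fin (D+1) ⊕ Fin e' × Fin (D+1)) ℂ

def QQ (e e' D : ℕ) : (CC e e' D)[X][X] := uni e D (fun i => X (Sum.inl i))
def RR (e e' D : ℕ) : (CC e e' D)[X][X] := uni e' D (fun i => X (Sum.inr i))

abbrev GG (e e' D : ℕ) := MvPolynomial (Fin (e+e') × Fin (D+D+1)) ℂ

def theta (e e' D : ℕ) : GG e e' D →ₐ[ℂ] CC e e' D :=
  aeval (fun ij => ((QQ e e' D * RR e e' D).coeff ij.1).coeff ij.2)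

lemma QR_eq (e e' D : ℕ) : QQ e e' D * RR e e' D =
    (uni (e+e') (D+D) (fun i => (X i : GG e e' D))).map (Polynomial.mapRingHom (theta e e' D).toRingHom) := by
  rw [uni_map]
  have := eq_uni (e+e') (D+D) (QQ e e' D * RR e e' D) ((uni_monic _ _ _).mul (uni_monic _ _ _))
    (by rw [QQ, RR, (uni_monic _ _ _).natDegree_mul (uni_monic _ _ _), uni_natDegree, uni_natDegree])
    (mul_coeff_natDegree D D _ _ (uni_coeff_natDegree _ _ _) (uni_coeff_natDegree _ _ _))
  rw [this]
  congr 1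
  ext1 ij
  simp only [theta, AlgHom.toRingHom_eq_coe, RingHom.coe_coe, aeval_X]

attribute [local instance] Polynomial.algebra

lemma theta_int (e e' D : ℕ) : (theta e e' D).toRingHom.IsIntegral := by
  let _ := (theta e e' D).toRingHom.toAlgebra
  have hQR := QR_eq e e' D
  have hm := uni_monic (e+e') (D+D) (fun i => (X i : GG e e' D))
  have hQ : ∀ i j, IsIntegral (GG e e' D) (((QQ e e' D).coeff i).coeff j) := by
    intro i j
    apply IsIntegral.coeff
    exact Polynomial.isIntegral_coeff_of_dvd _ _ hm (uni_monic _ _ _) ⟨_, hQR.symm⟩ i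
  have hR : ∀ i j, IsIntegral (GG e e' D) (((RR e e' D).coeff i).coeff j) := by
    intro i j
    apply IsIntegral.coeff
    exact Polynomial.isIntegral_coeff_of_dvd _ _ hm (uni_monic _ _ _) ⟨QQ e e' D, hQR.symm.trans (mul_comm (QQ e e' D) (RR e e' D))⟩ i
  intro v
  change IsIntegral (GG e e' D) v
  induction v using MvPolynomial.induction_on with
  | C a =>
    have : (C a : CC e e' D) = algebraMap (GG e e' D) _ (C a) :=
      ((theta e e' D).commutes a).symm
    rw [this]
    exact isIntegral_algebraMap
  | add p q hp hq => exact hp.add hq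
  | mul_X p i hp =>
    apply hp.mul
    rcases i with i | i
    · have := hQ i.1 i.2
      rwa [QQ, uni_coeff] at this
    · have := hR i.1 i.2
      rwa [RR, uni_coeff] at this

lemma fac_of_ker (e e' D : ℕ) (p : Fin (e+e') × Fin (D+D+1) → ℂ)
    (h : ∀ g, theta e e' D g = 0 → eval p g = 0) :
    ∃ x y, uni (e+e') (D+D) p = uni e D x * uni e' D y := by
  let _ := (theta e e' D).toRingHom.toAlgebra
  have : Algebra.IsIntegral (GG e e' D) (CC e e' D) := ⟨theta_int e e' D⟩
  have hmax : (vanishingIdeal ℂ {p} : Ideal (GG e e' D)).IsMaximal :=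
    isMaximal_iff_eq_vanishingIdeal_singleton.2 ⟨p, rfl⟩
  obtain ⟨M, hM, hMp⟩ := Ideal.exists_ideal_over_maximal_of_isIntegral (S := CC e e' D)
    (vanishingIdeal ℂ {p} : Ideal (GG e e' D)) (by
      intro g hg
      rw [mem_vanishingIdeal_singleton_iff]
      simpa [aeval_eq_eval] using h g hg)
  obtain ⟨z, rfl⟩ := isMaximal_iff_eq_vanishingIdeal_singleton.1 hM
  have hz : ∀ i, eval z (theta e e' D (X i)) = p i := by
    intro i
    have h1 : (X i - C (p i) : GG e e' D) ∈ (vanishingIdeal ℂ {p} : Ideal (GG e e' D)) := by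
      rw [mem_vanishingIdeal_singleton_iff]; simp
    rw [← hMp, Ideal.mem_comap, mem_vanishingIdeal_singleton_iff] at h1
    change aeval z (theta e e' D (X i - C (p i))) = 0 at h1
    rw [map_sub, map_sub, sub_eq_zero] at h1
    have h2 : theta e e' D (C (p i)) = C (p i) := (theta e e' D).commutes _
    rw [h2] at h1
    simpa [aeval_eq_eval] using h1
  refine ⟨fun i => z (Sum.inl i), fun i => z (Sum.inr i), ?_⟩
  have h3 := congrArg (Polynomial.map (Polynomial.mapRingHom (eval z))) (QR_eq e e' D)
  rw [uni_map, uni_map, Polynomial.map_mul, QQ, RR, uni_map, uni_map] at h3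
  simp only [eval_X] at h3
  rw [h3]
  congr 1
  ext1 i
  exact (hz i).symm

lemma ker_of_fac (e e' D : ℕ) (p : Fin (e+e') × Fin (D+D+1) → ℂ) (x y)
    (h : uni (e+e') (D+D) p = uni e D x * uni e' D y) (g) (hg : theta e e' D g = 0) :
    eval p g = 0 := by
  let z : Fin e × Fin (D+1) ⊕ Fin e' × Fin (D+1) → ℂ := Sum.elim x y
  have h3 := congrArg (Polynomial.map (Polynomial.mapRingHom (eval z))) (QR_eq e e' D)
  rw [uni_map, uni_map, Polynomial.map_mul, QQ, RR, uni_map, uni_map] at h3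
  simp only [eval_X] at h3
  have hz : ∀ i, p i = eval z (theta e e' D (X i)) := by
    intro i
    rw [← uni_coeff (e+e') (D+D) p i.1 i.2, h]
    have h4 := congrArg (fun P => (P.coeff i.1).coeff i.2) h3
    rw [uni_coeff] at h4
    exact h4
  have : eval p g = eval z (theta e e' D g) := by
    have : (aeval p : GG e e' D →ₐ[ℂ] ℂ) = (aeval z).comp (theta e e' D) := by
      ext i
      simpa [aeval_eq_eval] using hz i
    simpa [aeval_eq_eval] using congrArg (fun f => f g) this
  rw [this, hg, map_zero]

lemma swap_coeff (P : B[X][X]) (i j : ℕ) :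
    ((Polynomial.Bivariate.swap P).coeff i).coeff j = (P.coeff j).coeff i := by
  induction P using Polynomial.induction_on' with
  | add p q hp hq => simp [hp, hq]
  | monomial n a =>
    induction a using Polynomial.induction_on' with
    | add p q hp hq =>
      rw [map_add, map_add, Polynomial.coeff_add, Polynomial.coeff_add, hp, hq,
        Polynomial.coeff_add, Polynomial.coeff_add]
    | monomial k b =>
      rw [Polynomial.Bivariate.swap_monomial_monomial]
      simp only [Polynomial.coeff_monomial]
      split_ifs <;> simp_all [Polynomial.coeff_monomial]

lemma natDegree_swap_le (P : B[X][X]) (D : ℕ) :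
    (Polynomial.Bivariate.swap P).natDegree ≤ D ↔ ∀ i, (P.coeff i).natDegree ≤ D := by
  simp only [Polynomial.natDegree_le_iff_coeff_eq_zero]
  constructor
  · intro h i k hk
    rw [← swap_coeff, h k hk, Polynomial.coeff_zero]
  · intro h k hk
    ext i
    rw [swap_coeff, h i k hk, Polynomial.coeff_zero]

lemma factor_bound [IsDomain B] (P Q : B[X][X]) (h : P * Q ≠ 0) (D : ℕ)
    (hD : ∀ i, ((P * Q).coeff i).natDegree ≤ D) : ∀ i, (P.coeff i).natDegree ≤ D := by
  rw [← natDegree_swap_le] at hD ⊢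
  rw [map_mul, Polynomial.natDegree_mul] at hD
  · omega
  · simpa using left_ne_zero_of_mul h
  · simpa using right_ne_zero_of_mul h

def NoFac (P : ℂ[X][X]) : Prop := ∀ Q R : ℂ[X][X], Q.Monic → R.Monic → Q * R = P →
  Q.natDegree = 0 ∨ R.natDegree = 0

lemma lemF1 {A : Type*} [CommRing A] [Algebra ℂ A] (p : A[X][X]) (hp : p.Monic)
    (φ0 : A →ₐ[ℂ] ℂ) (h0 : NoFac (p.map (Polynomial.mapRingHom φ0.toRingHom))) (e e' : ℕ)
    (he : 0 < e) (he' : 0 < e') (hee : p.natDegree = e + e') :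
    ∃ h : A, φ0 h ≠ 0 ∧ ∀ φ : A →ₐ[ℂ] ℂ, φ h ≠ 0 → ∀ Q R : ℂ[X][X], Q.Monic → R.Monic →
      Q * R = p.map (Polynomial.mapRingHom φ.toRingHom) → Q.natDegree = e → False := by
  let D := p.support.sup (fun i => (p.coeff i).natDegree)
  have hD : ∀ i, (p.coeff i).natDegree ≤ D := by
    intro i
    by_cases hi : i ∈ p.support
    · exact Finset.le_sup (f := fun i => (p.coeff i).natDegree) hi
    · rw [Polynomial.notMem_support_iff.1 hi]; simp
  let x : Fin (e+e') × Fin (D+D+1) → A := fun ij => (p.coeff ij.1).coeff ij.2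
  have hpx : p = uni (e+e') (D+D) x := eq_uni _ _ p hp hee (fun i => (hD i).trans (by omega))
  have hpm : ∀ φ : A →ₐ[ℂ] ℂ, p.map (Polynomial.mapRingHom φ.toRingHom)
      = uni (e+e') (D+D) (fun i => φ (x i)) := by
    intro φ
    conv_lhs => rw [hpx]
    exact uni_map _ _ _ _
  have hev : ∀ (φ : A →ₐ[ℂ] ℂ) (g : GG e e' D), φ (aeval x g) = eval (fun i => φ (x i)) g := by
    intro φ g
    have : φ.comp (aeval x) = (aeval (fun i => φ (x i)) : GG e e' D →ₐ[ℂ] ℂ) := by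
      ext i; simp
    simpa [aeval_eq_eval] using congrArg (fun f => f g) this
  by_cases hk : ∀ g, theta e e' D g = 0 → eval (fun i => φ0 (x i)) g = 0
  · exfalso
    obtain ⟨y, z, hyz⟩ := fac_of_ker e e' D _ hk
    have := h0 (uni e D y) (uni e' D z) (uni_monic _ _ _) (uni_monic _ _ _) (by rw [hpm, hyz])
    rw [uni_natDegree, uni_natDegree] at this
    omega
  · push Not at hk
    obtain ⟨g, hg, hg'⟩ := hk
    refine ⟨aeval x g, by rwa [hev], ?_⟩
    intro φ hφ Q R hQ hR hQR hQe
    rw [hev] at hφ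
    apply hφ
    have hne : Q * R ≠ 0 := (hQ.mul hR).ne_zero
    have hb : ∀ i, ((Q * R).coeff i).natDegree ≤ D := by
      intro i
      rw [hQR, Polynomial.coeff_map]
      exact Polynomial.natDegree_map_le.trans (hD i)
    have hRe : R.natDegree = e' := by
      have := hQ.natDegree_mul hR
      rw [hQR, hp.natDegree_map] at this
      omega
    have hQb := factor_bound Q R hne D hb
    have hRb := factor_bound R Q (by rwa [mul_comm]) D (by rwa [mul_comm])
    refine ker_of_fac e e' D _ ?_ ?_ ?_ g hg
    · exact fun ij => (Q.coeff ij.1).coeff ij.2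
    · exact fun ij => (R.coeff ij.1).coeff ij.2
    · rw [← eq_uni e D Q hQ hQe hQb, ← eq_uni e' D R hR hRe hRb, hQR, hpm]

lemma lemF {A : Type*} [CommRing A] [Algebra ℂ A] (p : A[X][X]) (hp : p.Monic)
    (φ0 : A →ₐ[ℂ] ℂ) (h0 : NoFac (p.map (Polynomial.mapRingHom φ0.toRingHom))) :
    ∃ h : A, φ0 h ≠ 0 ∧ ∀ φ : A →ₐ[ℂ] ℂ, φ h ≠ 0 →
      NoFac (p.map (Polynomial.mapRingHom φ.toRingHom)) := by
  have : ∀ e : ℕ, ∃ h : A, φ0 h ≠ 0 ∧ (0 < e ∧ e < p.natDegree →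
      ∀ φ : A →ₐ[ℂ] ℂ, φ h ≠ 0 → ∀ Q R : ℂ[X][X], Q.Monic → R.Monic →
      Q * R = p.map (Polynomial.mapRingHom φ.toRingHom) → Q.natDegree = e → False) := by
    intro e
    by_cases he : 0 < e ∧ e < p.natDegree
    · obtain ⟨h, h1, h2⟩ := lemF1 p hp φ0 h0 e (p.natDegree - e) he.1 (by omega) (by omega)
      exact ⟨h, h1, fun _ => h2⟩
    · exact ⟨1, by simp, fun h => absurd h he⟩
  choose h h1 h2 using this
  refine ⟨∏ e ∈ Finset.range p.natDegree, h e, ?_, ?_⟩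
  · rw [map_prod]
    exact Finset.prod_ne_zero_iff.2 fun e _ => h1 e
  · intro φ hφ Q R hQ hR hQR
    rw [map_prod, Finset.prod_ne_zero_iff] at hφ
    by_contra hcon
    push Not at hcon
    have := hQ.natDegree_mul hR
    have hN : (p.map (Polynomial.mapRingHom φ.toRingHom)).natDegree = p.natDegree := hp.natDegree_map _
    rw [hQR, hN] at this
    exact h2 Q.natDegree (by omega) φ (hφ _ (Finset.mem_range.2 (by omega))) Q R hQ hR hQR rfl

end fac

set_option linter.unusedSectionVars false

lemma cayley {R E ι : Type*} [CommRing R] [CommRing E] [Fintype ι] [DecidableEq ι] (κ : R →+* E)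
    (M : Matrix ι ι R) (y : ι → E) (i0 : ι) (hy0 : y i0 = 1) (h : E)
    (hM : ∀ i, h * y i = ∑ j, κ (M i j) * y j) : Polynomial.eval₂ κ h M.charpoly = 0 := by
  rw [Polynomial.eval₂_eq_eval_map, ← Matrix.charpoly_map, Matrix.eval_charpoly]
  set N := Matrix.scalar ι h - M.map κ with hN
  have h1 : N.mulVec y = 0 := by
    ext i
    rw [hN, Matrix.sub_mulVec]
    simp only [Pi.sub_apply, Matrix.scalar_apply, Matrix.mulVec_diagonal, Pi.zero_apply]
    rw [hM i, sub_eq_zero]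
    rfl
  have h2 := congrArg (N.adjugate.mulVec) h1
  rw [Matrix.mulVec_mulVec, Matrix.adjugate_mul, Matrix.mulVec_zero, Matrix.smul_mulVec,
    Matrix.one_mulVec] at h2
  have h3 := congrFun h2 i0
  simpa [hy0] using h3

lemma irr_of_noFac {R : Type*} [CommRing R] [IsDomain R] (π : R →+* Polynomial ℂ)
    (P : Polynomial R) (hP : P.Monic) (h1 : P.natDegree ≠ 0) (h : NoFac (P.map π)) :
    Irreducible P := by
  rw [hP.irreducible_iff_natDegree]
  · refine ⟨?_, ?_⟩
    · rintro rfl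
      simp at h1
    intro Q T hQ hT hQT
    have := h (Q.map π) (T.map π) (hQ.map π) (hT.map π) (by rw [← Polynomial.map_mul, hQT])
    rwa [hQ.natDegree_map, hT.natDegree_map] at this

section main
variable {σ : Type*} [Fintype σ] [DecidableEq σ] (t : σ → Prop) [DecidablePred t]

lemma one_notMem (f : σ → MvPolynomial σ ℂ) (a : σ → ℕ) (ha : ∀ j, 1 ≤ a j)
    (hf : ∀ j, (f j).IsHomogeneous (a j)) (hs : ∀ e, Sur f a e) : (1 : MvPolynomial σ ℂ) ∉ II t f := by
  intro h
  obtain ⟨v, hv, hv1⟩ := exists_irr t f a ha (psi_surj f a hs) 1 h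
  have : psi f a (monomial 0 1) = 1 := by
    rw [psi_monomial, one_smul]; simp [psiMon]
  rw [← this] at hv1
  have := psi_inj f a hf hs hv1
  subst this
  have := hv 0 (fun j _ => by have := ha j; simp; omega)
  simp at this

theorem prime_and_dim (f : σ → MvPolynomial σ ℂ) (a : σ → ℕ) (ha : ∀ j, 1 ≤ a j)
    (hf : ∀ j, (f j).IsHomogeneous (a j))
    (ht : ∀ j, t j → f j = X j ∧ a j = 1) (hs : ∀ e, Sur f a e)
    (h : MvPolynomial σ ℂ)
    (M : Matrix (∀ j, Fin (a j)) (∀ j, Fin (a j)) (MvPolynomial {j : σ // t j} ℂ))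
    (hM : ∀ α, h * yMon α - ∑ β, rho t ℂ (M α β) * yMon β ∈ II t f)
    (π : MvPolynomial {j : σ // t j} ℂ →+* Polynomial ℂ)
    (hno : NoFac (M.charpoly.map π)) :
    (II t f).IsPrime ∧
      ringKrullDim (MvPolynomial σ ℂ ⧸ II t f) = (Fintype.card {j : σ // t j} : WithBot ℕ∞) := by
  let R := MvPolynomial {j : σ // t j} ℂ
  let E := MvPolynomial σ ℂ ⧸ II t f
  let κ : R →+* E := (Ideal.Quotient.mk (II t f)).comp (rho t ℂ).toRingHom
  let _ : Algebra R E := κ.toAlgebra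
  have hsmul : ∀ (g : R) (u : MvPolynomial σ ℂ), g • (Ideal.Quotient.mk (II t f) u : E) =
      Ideal.Quotient.mk (II t f) (rho t ℂ g * u) := by
    intro g u
    rw [Algebra.smul_def, map_mul]; rfl
  have h1 := one_notMem t f a ha hf hs
  have hnt : Nontrivial E := Ideal.Quotient.nontrivial_iff.2 (fun h => h1 (by rw [h]; trivial))
  have hreg : ∀ (g : R) (u : E), g ≠ 0 → g • u = 0 → u = 0 := by
    intro g u hg hgu
    obtain ⟨u, rfl⟩ := Ideal.Quotient.mk_surjective u
    rw [hsmul, Ideal.Quotient.eq_zero_iff_mem] at hgu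
    rw [Ideal.Quotient.eq_zero_iff_mem]
    exact reg t f a ha hf ht hs g hg u hgu
  let y : (∀ j, Fin (a j)) → E := fun α => Ideal.Quotient.mk _ (yMon α)
  have hy : ∀ v : E, ∃ b : (∀ j, Fin (a j)) → R, v = ∑ i, b i • y i := by
    intro v
    obtain ⟨v, rfl⟩ := Ideal.Quotient.mk_surjective v
    obtain ⟨v, rfl⟩ := psi_surj f a hs v
    obtain ⟨b, hb⟩ := psi_red t f a ha ht v
    refine ⟨b, ?_⟩
    rw [← Ideal.Quotient.mk_eq_mk_iff_sub_mem, map_sum] at hb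
    rw [hb]
    exact Finset.sum_congr rfl fun i _ => (hsmul _ _).symm
  let i0 : ∀ j, Fin (a j) := fun j => ⟨0, ha j⟩
  have hch := cayley κ M y i0 (by simp [y, yMon, i0]) (Ideal.Quotient.mk _ h) (by
    intro α
    have := hM α
    rw [← Ideal.Quotient.mk_eq_mk_iff_sub_mem, map_sum, map_mul] at this
    rw [this]
    exact Finset.sum_congr rfl fun i _ => by rw [map_mul]; rfl)
  have hcard : M.charpoly.natDegree = Fintype.card (∀ j, Fin (a j)) := Matrix.charpoly_natDegree_eq_dim M
  have hirr := irr_of_noFac π M.charpoly (Matrix.charpoly_monic M) (by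
    rw [hcard]
    have : Nonempty (∀ j, Fin (a j)) := ⟨i0⟩
    exact Fintype.card_ne_zero) hno
  have hdom : IsDomain E := domain_of hreg y hy M.charpoly (Matrix.charpoly_monic M) hirr hcard _ hch
  refine ⟨(Ideal.Quotient.isDomain_iff_prime _).1 hdom, ?_⟩
  let _ : Module R E := Algebra.toModule
  have hfin : Module.Finite R E := by
    classical
    refine ⟨⟨Finset.univ.image y, ?_⟩⟩
    rw [eq_top_iff]
    intro v _
    obtain ⟨b, rfl⟩ := hy v
    exact Submodule.sum_mem _ fun i _ => Submodule.smul_mem _ _ (Submodule.subset_span (by simp))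
  have hint : Algebra.IsIntegral R E := Algebra.IsIntegral.of_finite R E
  have hinj : Function.Injective (algebraMap R E) := by
    rw [injective_iff_map_eq_zero]
    intro g hg
    by_contra hne
    refine one_ne_zero (hreg g (1 : E) hne ?_)
    rw [Algebra.smul_def, hg, zero_mul]
  rw [krullDim_integral hinj, MvPolynomial.ringKrullDim_of_isNoetherianRing, ringKrullDim_eq_zero_of_field]
  simp

end main

set_option linter.unusedSectionVars false

lemma expand_ne (N : ℕ) (hN : 0 < N) (H0 : ℂ) (hH : H0 ≠ 0) (Q : Polynomial (Polynomial ℂ)) (hQ : Q.Monic)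
    (he : Q.natDegree < N) :
    Polynomial.eval₂ (Polynomial.expand ℂ N).toRingHom (Polynomial.C H0 * Polynomial.X) Q ≠ 0 := by
  intro h0
  have h1 := congrArg (fun q => Polynomial.coeff q Q.natDegree) h0
  simp only [Polynomial.coeff_zero] at h1
  rw [Polynomial.eval₂_eq_sum_range, Polynomial.finsetSum_coeff, Finset.sum_range_succ,
    Finset.sum_eq_zero, zero_add] at h1
  · rw [hQ.coeff_natDegree, map_one, one_mul, mul_pow, ← Polynomial.C_pow, Polynomial.coeff_C_mul,
      Polynomial.coeff_X_pow, if_pos rfl, mul_one] at h1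
    exact pow_ne_zero _ hH h1
  · intro i hi
    rw [Finset.mem_range] at hi
    rw [mul_pow, ← Polynomial.C_pow, mul_left_comm, Polynomial.coeff_C_mul, Polynomial.coeff_mul_X_pow',
      if_pos hi.le]
    have : ((Polynomial.expand ℂ N).toRingHom (Q.coeff i)).coeff (Q.natDegree - i) = 0 := by
      change (Polynomial.expand ℂ N (Q.coeff i)).coeff (Q.natDegree - i) = 0
      rw [Polynomial.coeff_expand hN, if_neg]
      intro hd
      have := Nat.le_of_dvd (by omega) hd
      omega
    rw [this, mul_zero]

lemma noFac_of (N : ℕ) (H0 : ℂ) (hH : H0 ≠ 0) (P : Polynomial (Polynomial ℂ))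
    (hN : P.natDegree = N)
    (h : Polynomial.eval₂ (Polynomial.expand ℂ N).toRingHom (Polynomial.C H0 * Polynomial.X) P = 0) :
    NoFac P := by
  intro Q T hQ hT hQT
  by_contra hcon
  push Not at hcon
  have hd := hQ.natDegree_mul hT
  rw [hQT, hN] at hd
  rw [← hQT, Polynomial.eval₂_mul, mul_eq_zero] at h
  rcases h with h | h
  · exact expand_ne N (by omega) H0 hH Q hQ (by omega) h
  · exact expand_ne N (by omega) H0 hH T hT (by omega) h

section family
variable {σ : Type*} [Fintype σ] [DecidableEq σ] (t : σ → Prop) [DecidablePred t]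

lemma yMon_hom {B : Type*} [CommRing B] {a : σ → ℕ} (α : ∀ j, Fin (a j)) :
    (yMon α : MvPolynomial σ B).IsHomogeneous (∑ j, (α j : ℕ)) := by
  apply IsHomogeneous.prod
  intro j _
  simpa using (isHomogeneous_X B j).pow (α j : ℕ)

lemma exists_matrix {A : Type*} [CommRing A] (F : σ → MvPolynomial σ A) (a : σ → ℕ)
    (ha : ∀ j, 1 ≤ a j) (hF : ∀ j, (F j).IsHomogeneous (a j))
    (ht : ∀ j, t j → F j = X j ∧ a j = 1) (w : σ) (H : A)
    (hH : ∀ e ≤ ∑ j, (a j - 1) + 1, (Mat F a e).det ∣ H) :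
    ∃ M : Matrix (∀ j, Fin (a j)) (∀ j, Fin (a j)) (MvPolynomial {j : σ // t j} A),
      ∀ α, C H * X w * yMon α - ∑ β, rho t A (M α β) * yMon β ∈ II t F := by
  have : ∀ α : ∀ j, Fin (a j), ∃ b : (∀ j, Fin (a j)) → MvPolynomial {j : σ // t j} A,
      C H * X w * yMon α - ∑ β, rho t A (b β) * yMon β ∈ II t F := by
    intro α
    obtain ⟨k, hk⟩ := hH (1 + ∑ j, (α j : ℕ)) (by
      rw [add_comm]
      gcongr with j
      have := (α j).2
      omega)
    obtain ⟨v, _, hv⟩ := det_smul_mem F a hF _ _ ((isHomogeneous_X A w).mul (yMon_hom α))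
    obtain ⟨b, hb⟩ := psi_red t F a ha ht (k • v)
    refine ⟨b, ?_⟩
    rw [map_smul, hv, smul_smul, mul_comm k, ← hk, smul_eq_C_mul, ← mul_assoc] at hb
    exact hb
  choose M hM using this
  exact ⟨M, hM⟩

lemma map_II {A A' : Type*} [CommRing A] [CommRing A'] (φ : A →+* A') (F : σ → MvPolynomial σ A)
    (x : MvPolynomial σ A) (hx : x ∈ II t F) : map φ x ∈ II t (fun j => map φ (F j)) := by
  have := Ideal.mem_map_of_mem (map φ) hx
  rw [II, Ideal.map_span, ← Set.range_comp] at this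
  exact this

/-- specialization of the parameters -/
def piq (A : Type*) [CommRing A] [Algebra ℂ A] (q : {j : σ // t j} → Polynomial ℂ) :
    MvPolynomial {j : σ // t j} A →+* Polynomial A :=
  eval₂Hom Polynomial.C (fun j => (q j).map (algebraMap ℂ A))

lemma piq_map {A : Type*} [CommRing A] [Algebra ℂ A] (q : {j : σ // t j} → Polynomial ℂ)
    (φ : A →ₐ[ℂ] ℂ) : (piq t ℂ q).comp (map φ.toRingHom)
      = (Polynomial.mapRingHom φ.toRingHom).comp (piq t A q) := by
  apply MvPolynomial.ringHom_ext
  · intro r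
    simp [piq]
  · intro j
    simp only [piq, RingHom.comp_apply, map_X, eval₂Hom_X', Polynomial.coe_mapRingHom, Polynomial.map_map]
    congr 1
    ext z
    simp

theorem family {A : Type*} [CommRing A] [Algebra ℂ A] (F : σ → MvPolynomial σ A) (a : σ → ℕ)
    (ha : ∀ j, 1 ≤ a j) (hF : ∀ j, (F j).IsHomogeneous (a j))
    (ht : ∀ j, t j → F j = X j ∧ a j = 1) (w : σ) (q : {j : σ // t j} → Polynomial ℂ)
    (φ0 : A →ₐ[ℂ] ℂ) (hs0 : ∀ e, Sur (fun j => map φ0.toRingHom (F j)) a e)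
    (χ : MvPolynomial σ ℂ →ₐ[ℂ] Polynomial ℂ)
    (hχ : ∀ j, ¬ t j → χ (map φ0.toRingHom (F j)) = 0) (hχw : χ (X w) = Polynomial.X)
    (hχq : ∀ j : {j : σ // t j}, χ (X j.1) = Polynomial.expand ℂ (∏ j, a j) (q j)) :
    ∃ h : A, φ0 h ≠ 0 ∧ ∀ φ : A →ₐ[ℂ] ℂ, φ h ≠ 0 →
      (II t (fun j => map φ.toRingHom (F j))).IsPrime ∧
      ringKrullDim (MvPolynomial σ ℂ ⧸ II t (fun j => map φ.toRingHom (F j))) =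
        (Fintype.card {j : σ // t j} : WithBot ℕ∞) := by
  let H : A := ∏ e ∈ Finset.range (∑ j, (a j - 1) + 2), (Mat F a e).det
  obtain ⟨M, hM⟩ := exists_matrix t F a ha hF ht w H (fun e he =>
    Finset.dvd_prod_of_mem _ (Finset.mem_range.2 (by omega)))
  have hHφ : ∀ φ : A →ₐ[ℂ] ℂ, φ H = ∏ e ∈ Finset.range (∑ j, (a j - 1) + 2),
      (Mat (fun j => map φ.toRingHom (F j)) a e).det := by
    intro φ
    rw [map_prod]
    refine Finset.prod_congr rfl fun e _ => ?_
    rw [← Mat_map]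
    exact RingHom.map_det φ.toRingHom _
  have hMφ : ∀ (φ : A →ₐ[ℂ] ℂ) α, C (φ H) * X w * yMon α -
      ∑ β, rho t ℂ ((M.map (map φ.toRingHom)) α β) * yMon β ∈ II t (fun j => map φ.toRingHom (F j)) := by
    intro φ α
    have := map_II t φ.toRingHom F _ (hM α)
    simp only [map_sub, map_mul, map_sum, map_C, map_X, map_rename, rho] at this
    simpa [yMon, rho] using this
  let p := (M.map (piq t A q)).charpoly
  have hp : p.Monic := Matrix.charpoly_monic _
  have hpφ : ∀ φ : A →ₐ[ℂ] ℂ, p.map (Polynomial.mapRingHom φ.toRingHom) =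
      (M.map (map φ.toRingHom)).charpoly.map (piq t ℂ q) := by
    intro φ
    rw [← Matrix.charpoly_map, ← Matrix.charpoly_map, Matrix.map_map, Matrix.map_map,
      ← RingHom.coe_comp, ← RingHom.coe_comp, piq_map]
  have hH0 : φ0 H ≠ 0 := by
    rw [hHφ]
    exact Finset.prod_ne_zero_iff.2 fun e _ => (det_isUnit_of_sur _ _ _ (hs0 e)).ne_zero
  have hno : NoFac (p.map (Polynomial.mapRingHom φ0.toRingHom)) := by
    apply noFac_of (∏ j, a j) (φ0 H) hH0
    · rw [hpφ, ← Matrix.charpoly_map, Matrix.charpoly_natDegree_eq_dim]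
      simp
    · rw [hpφ, ← Matrix.charpoly_map]
      have hker : ∀ x ∈ II t (fun j => map φ0.toRingHom (F j)), χ x = 0 := by
        intro x hx
        have : II t (fun j => map φ0.toRingHom (F j)) ≤ RingHom.ker χ := by
          rw [II, Ideal.span_le]
          rintro _ ⟨j, rfl⟩
          exact hχ j.1 j.2
        exact this hx
      have hcomp : ∀ g, χ (rho t ℂ g) = Polynomial.expand ℂ (∏ j, a j) (piq t ℂ q g) := by
        have : (χ.comp (rho t ℂ)).toRingHom = (Polynomial.expand ℂ (∏ j, a j)).toRingHom.comp (piq t ℂ q) := by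
          apply MvPolynomial.ringHom_ext
          · intro r
            simp [piq, rho]
          · intro j
            simp [piq, rho, hχq]
        intro g
        exact congrArg (fun f => f g) this
      refine cayley _ _ (fun α => χ (yMon α)) (fun j => ⟨0, ha j⟩) (by simp [yMon]) _ ?_
      intro α
      have := hker _ (hMφ φ0 α)
      rw [map_sub, map_mul, map_mul, hχw, map_sum, sub_eq_zero] at this
      have hC : χ (C (φ0 H)) = Polynomial.C (φ0 H) := χ.commutes _
      rw [hC] at this
      rw [this]
      refine Finset.sum_congr rfl fun β _ => ?_
      rw [map_mul, hcomp]
      rfl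
  obtain ⟨h, hh0, hh⟩ := lemF p hp φ0 hno
  refine ⟨H * h, by rw [map_mul]; exact mul_ne_zero hH0 hh0, ?_⟩
  intro φ hφ
  rw [map_mul] at hφ
  have hFφ : ∀ j, (map φ.toRingHom (F j)).IsHomogeneous (a j) := fun j => (hF j).map _
  have hs : ∀ e, Sur (fun j => map φ.toRingHom (F j)) a e := by
    apply sur_all _ a ha hFφ
    intro e he
    apply sur_of_det _ a hFφ
    have := left_ne_zero_of_mul hφ
    rw [hHφ, Finset.prod_ne_zero_iff] at this
    exact isUnit_iff_ne_zero.2 (this e (Finset.mem_range.2 (by omega)))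
  apply prime_and_dim t _ a ha hFφ (fun j hj => ⟨by rw [(ht j hj).1, map_X], (ht j hj).2⟩) hs
    (C (φ H) * X w) (M.map (map φ.toRingHom)) (hMφ φ) (piq t ℂ q)
  rw [← hpφ]
  exact hh φ (right_ne_zero_of_mul hφ)

end family

lemma isAlgSet_zeroLocus {ι : Type*} (I : Ideal (MvPolynomial ι ℂ)) : IsAlgSet (zeroLocus ℂ I) :=
  ⟨I, by ext x; simp [zeroLocus, aeval_eq_eval]⟩

lemma IsAlgSet.eq {ι : Type*} {S : Set (ι → ℂ)} (h : IsAlgSet S) :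
    zeroLocus ℂ (vanishingIdeal ℂ S) = S := by
  obtain ⟨T, rfl⟩ := h
  apply le_antisymm _ (zeroLocus_vanishingIdeal_le _)
  intro x hx p hp
  have := hx p (fun y hy => by simpa [aeval_eq_eval] using hy p hp)
  simpa [aeval_eq_eval] using this

lemma algIrr_of_prime {ι : Type*} [Finite ι] (I : Ideal (MvPolynomial ι ℂ)) (hI : I.IsPrime) :
    AlgIrreducible (zeroLocus ℂ I) := by
  have hv := IsPrime.vanishingIdeal_zeroLocus (K := ℂ) I
  constructor
  · rw [Set.nonempty_iff_ne_empty]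
    intro h
    rw [h, vanishingIdeal_empty] at hv
    exact hI.ne_top hv.symm
  · intro A B hA hB hAB
    by_contra hcon
    push Not at hcon
    obtain ⟨hcA, hcB⟩ := hcon
    rw [← hA.eq, Set.not_subset] at hcA
    rw [← hB.eq, Set.not_subset] at hcB
    obtain ⟨x, hx, hxA⟩ := hcA
    obtain ⟨y, hy, hyB⟩ := hcB
    simp only [mem_zeroLocus_iff, not_forall] at hxA hyB
    obtain ⟨p, hp, hpx⟩ := hxA
    obtain ⟨q, hq, hqy⟩ := hyB
    have hpq : p * q ∈ I := by
      rw [← hv]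
      intro z hz
      rw [map_mul]
      rcases hAB hz with h | h
      · rw [hp z h, zero_mul]
      · rw [hq z h, mul_zero]
    rcases hI.mem_or_mem hpq with h | h
    · exact hpx (hx p h)
    · exact hqy (hy q h)

lemma prime_of_algIrr {ι : Type*} (S : Set (ι → ℂ)) (hS : AlgIrreducible S) :
    (vanishingIdeal ℂ S).IsPrime := by
  constructor
  · intro h
    obtain ⟨x, hx⟩ := hS.1
    have : (1 : MvPolynomial ι ℂ) ∈ vanishingIdeal ℂ S := by rw [h]; trivial
    have := this x hx
    simp at this
  · intro p q hpq
    have := hS.2 {x | ∀ r ∈ ({p} : Set (MvPolynomial ι ℂ)), eval x r = 0}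
      {x | ∀ r ∈ ({q} : Set (MvPolynomial ι ℂ)), eval x r = 0} ⟨_, rfl⟩ ⟨_, rfl⟩ (by
        intro x hx
        have := hpq x hx
        rw [map_mul, mul_eq_zero] at this
        simpa [aeval_eq_eval] using this)
    rcases this with h | h
    · left; intro x hx; simpa [aeval_eq_eval] using h hx
    · right; intro x hx; simpa [aeval_eq_eval] using h hx

lemma algDim_zeroLocus {ι : Type*} [Finite ι] (I : Ideal (MvPolynomial ι ℂ)) :
    algDim (zeroLocus ℂ I) = ringKrullDim (MvPolynomial ι ℂ ⧸ I) := by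
  rw [ringKrullDim_quotient, ← Order.krullDim_orderDual]
  let F : {T : Set (ι → ℂ) // IsAlgSet T ∧ AlgIrreducible T ∧ T ⊆ zeroLocus ℂ I} →
      PrimeSpectrum.zeroLocus (R := MvPolynomial ι ℂ) I := fun T =>
    ⟨⟨vanishingIdeal ℂ T.1, prime_of_algIrr _ T.2.2.1⟩,
      le_zeroLocus_iff_le_vanishingIdeal.1 T.2.2.2⟩
  let G : PrimeSpectrum.zeroLocus (R := MvPolynomial ι ℂ) I →
      {T : Set (ι → ℂ) // IsAlgSet T ∧ AlgIrreducible T ∧ T ⊆ zeroLocus ℂ I} := fun p =>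
    ⟨zeroLocus ℂ p.1.asIdeal, isAlgSet_zeroLocus _, algIrr_of_prime _ p.1.2,
      zeroLocus_anti_mono p.2⟩
  have hGF : ∀ T, G (F T) = T := fun T => Subtype.ext T.2.1.eq
  have hFG : ∀ p, F (G p) = p := fun p => Subtype.ext (PrimeSpectrum.ext
    (by
      have := p.1.2
      exact IsPrime.vanishingIdeal_zeroLocus (K := ℂ) p.1.asIdeal))
  have hF : ∀ T T', T ≤ T' → F T' ≤ F T := fun T T' h => vanishingIdeal_anti_mono h
  have hG : ∀ p p', p ≤ p' → G p' ≤ G p := fun p p' h => zeroLocus_anti_mono h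
  symm
  apply Order.krullDim_eq_of_orderIso
  exact
  { toFun := fun p => G (OrderDual.ofDual p)
    invFun := fun T => OrderDual.toDual (F T)
    left_inv := fun p => hFG p
    right_inv := fun T => hGF T
    map_rel_iff' := by
      intro p q
      constructor
      · intro h
        have := hF _ _ h
        change F (G _) ≤ F (G _) at this
        rw [hFG, hFG] at this
        exact this
      · intro h
        exact hG _ _ h }

set_option linter.unusedSectionVars false

section sp
variable {σ : Type*} [Fintype σ] [DecidableEq σ] (P : σ → Prop) [DecidablePred P]

def yd (μ : σ →₀ ℕ) : ℕ := ∑ j, if P j then μ j else 0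

lemma yd_add (μ ν : σ →₀ ℕ) : yd P (μ + ν) = yd P μ + yd P ν := by
  unfold yd
  rw [← Finset.sum_add_distrib]
  refine Finset.sum_congr rfl fun j _ => ?_
  split_ifs <;> simp

lemma yd_single (j : σ) (k : ℕ) : yd P (Finsupp.single j k) = if P j then k else 0 := by
  unfold yd
  rw [Finset.sum_eq_single j]
  · simp
  · intro i _ hi
    rw [Finsupp.single_eq_of_ne hi]; simp
  · simp

lemma sur_special (f : σ → MvPolynomial σ ℂ) (a : σ → ℕ) (ha : ∀ j, 1 ≤ a j)
    (hn : ∀ j, ¬ P j → f j = X j ∧ a j = 1) (ν : σ → (σ →₀ ℕ))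
    (hy : ∀ j, P j → f j = X j ^ a j - monomial (ν j) 1 ∧ (ν j).degree = a j ∧ yd P (ν j) < a j)
    (e : ℕ) : Sur f a e := by
  induction e using Nat.strong_induction_on with
  | _ e ih =>
  apply sur_of_monomials
  have : ∀ k, ∀ μ : σ →₀ ℕ, yd P μ = k → μ.degree = e →
      monomial μ 1 ∈ (homogeneousSubmodule σ ℂ e).map (psi f a) := by
    intro k
    induction k using Nat.strong_induction_on with
    | _ k ihk =>
    intro μ hk hμ
    by_cases hred : ∀ j, P j → μ j < a j
    · refine ⟨monomial μ 1, isHomogeneous_monomial _ hμ, ?_⟩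
      rw [psi_monomial, one_smul, psiMon, monomial_eq, Finsupp.prod_fintype _ _ (by simp)]
      simp only [C_1, one_mul]
      refine Finset.prod_congr rfl fun j _ => ?_
      by_cases hj : P j
      · rw [Nat.mod_eq_of_lt (hred j hj), Nat.div_eq_of_lt (hred j hj), pow_zero, mul_one]
      · rw [(hn j hj).1, (hn j hj).2]; simp [Nat.mod_one]
    · push Not at hred
      obtain ⟨j, hj, hjμ⟩ := hred
      obtain ⟨η, rfl⟩ : ∃ η, μ = Finsupp.single j (a j) + η :=
        ⟨μ - Finsupp.single j (a j), by rw [add_tsub_cancel_of_le]; simpa using hjμ⟩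
      obtain ⟨h1, h2, h3⟩ := hy j hj
      have hd : a j + η.degree = e := by rw [← hμ, map_add]; simp
      have e1 : (monomial (Finsupp.single j (a j) + η) 1 : MvPolynomial σ ℂ)
          = f j * monomial η 1 + monomial (ν j + η) 1 := by
        rw [h1, sub_mul, X_pow_eq_monomial, monomial_mul, monomial_mul]; simp
      rw [e1]
      apply Submodule.add_mem
      · rw [← hd]
        apply sur_mul f a ha
        have hj1 := ha j
        exact ih η.degree (by omega) (show monomial η 1 ∈ homogeneousSubmodule σ ℂ _ from isHomogeneous_monomial _ rfl)
      · refine ihk (yd P (ν j + η)) ?_ _ rfl ?_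
        · rw [yd_add, yd_single, if_pos hj] at hk
          rw [yd_add]; omega
        · rw [map_add, h2, hd]
  intro μ hμ
  exact this _ μ rfl hμ

end sp

section conc
variable (n m r : ℕ)

def aN (k : ℕ) : ℕ := if 1 ≤ k ∧ k ≤ r then m + (k - 1) else 1

def aF (j : Fin (n+1)) : ℕ := aN m r j

abbrev tF (j : Fin (n+1)) : Prop := r < (j : ℕ)

abbrev AA := MvPolynomial (Fin r × (Fin (n+1) →₀ ℕ)) ℂ

def FF (j : Fin (n+1)) : MvPolynomial (Fin (n+1)) (AA n r) :=
  if h : 1 ≤ (j : ℕ) ∧ (j : ℕ) ≤ r then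
    ∑ μ ∈ Finset.finsuppAntidiag (Finset.univ : Finset (Fin (n+1))) (m + (j - 1)),
      monomial μ (X (⟨j - 1, by omega⟩, μ))
  else X j

/-- specialised forms -/
def fc (c : Fin r → MvPolynomial (Fin (n+1)) ℂ) (j : Fin (n+1)) : MvPolynomial (Fin (n+1)) ℂ :=
  if h : 1 ≤ (j : ℕ) ∧ (j : ℕ) ≤ r then c ⟨j - 1, by omega⟩ else X j

def phic (c : Fin r → MvPolynomial (Fin (n+1)) ℂ) : AA n r →ₐ[ℂ] ℂ :=
  aeval (fun iμ => coeff iμ.2 (c iμ.1))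

lemma FF_hom (j : Fin (n+1)) : (FF n m r j).IsHomogeneous (aF n m r j) := by
  unfold FF aF aN
  split_ifs with h
  · apply IsHomogeneous.sum
    intro μ hμ
    exact isHomogeneous_monomial _ (mem_Dg.1 hμ)
  · exact isHomogeneous_X _ _

lemma FF_map (c : Fin r → MvPolynomial (Fin (n+1)) ℂ) (hc : ∀ i, (c i).IsHomogeneous (m + i))
    (j : Fin (n+1)) : map (phic n r c).toRingHom (FF n m r j) = fc n r c j := by
  unfold FF fc
  split_ifs with h
  · rw [map_sum]
    have h1 := hom_eq_sum (hc ⟨j - 1, by omega⟩)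
    rw [h1, Finset.univ_eq_attach, Finset.sum_attach (Finset.finsuppAntidiag (Finset.univ : Finset (Fin (n+1))) (m + (j - 1)))
    (fun ν => coeff ν (c ⟨j - 1, by omega⟩) • (monomial ν 1 : MvPolynomial (Fin (n+1)) ℂ))]
    refine Finset.sum_congr rfl fun μ _ => ?_
    rw [map_monomial, smul_monomial, smul_eq_mul, mul_one]
    congr 1
    simp [phic]
  · rw [map_X]

/-- previous variable -/
def pr (hr : r + 2 ≤ n) (i : Fin r) : Fin (n+1) :=
  if (i : ℕ) = 0 then ⟨r + 1, by omega⟩ else ⟨i, by omega⟩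

def c0 (hr : r + 2 ≤ n) (i : Fin r) : MvPolynomial (Fin (n+1)) ℂ :=
  X ⟨i + 1, by omega⟩ ^ (m + i) - monomial (Finsupp.single (pr n r hr i) 1 +
    Finsupp.single ⟨r + 2, by omega⟩ (m + i - 1)) 1

lemma c0_hom (hm : 1 ≤ m) (hr : r + 2 ≤ n) (i : Fin r) : (c0 n m r hr i).IsHomogeneous (m + i) := by
  unfold c0
  apply IsHomogeneous.sub
  · simpa using (isHomogeneous_X ℂ (⟨i + 1, by omega⟩ : Fin (n+1))).pow (m + i)
  · apply isHomogeneous_monomial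
    rw [map_add, Finsupp.degree_single, Finsupp.degree_single]; omega

lemma c0_supp (hr : r + 2 ≤ n) (i : Fin r) :
    c0 n m r hr i ∈ supported ℂ {j : Fin (n + 1) | j ≠ 0} := by
  have hX : ∀ j : Fin (n+1), (j : ℕ) ≠ 0 → (X j : MvPolynomial (Fin (n+1)) ℂ) ∈ supported ℂ {j : Fin (n + 1) | j ≠ 0} := by
    intro j hj
    rw [X_mem_supported]
    intro h
    exact hj (by rw [h]; rfl)
  unfold c0
  apply Subalgebra.sub_mem
  · exact Subalgebra.pow_mem _ (hX _ (by simp)) _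
  · rw [← one_mul (1 : ℂ), ← monomial_mul, ← X_pow_eq_monomial, ← X_pow_eq_monomial]
    apply Subalgebra.mul_mem
    · refine Subalgebra.pow_mem _ (hX _ ?_) _
      unfold pr
      split_ifs with h
      · simp
      · exact h
    · exact Subalgebra.pow_mem _ (hX _ (by simp)) _

lemma sur_c0 (hm : 1 ≤ m) (hr : r + 2 ≤ n) (e : ℕ) :
    Sur (fc n r (c0 n m r hr)) (aF n m r) e := by
  apply sur_special (fun j : Fin (n+1) => 1 ≤ (j : ℕ) ∧ (j : ℕ) ≤ r) _ _ _ _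
    (fun j => if h : 1 ≤ (j : ℕ) ∧ (j : ℕ) ≤ r then (Finsupp.single (pr n r hr ⟨j - 1, by omega⟩) 1 +
    Finsupp.single ⟨r + 2, by omega⟩ (m + (j - 1) - 1)) else 0)
  · intro j hj
    have ha : aF n m r j = m + (j - 1) := by unfold aF aN; rw [if_pos hj]
    rw [dif_pos hj, ha]
    refine ⟨?_, ?_, ?_⟩
    · unfold fc c0
      rw [dif_pos hj]
      congr 3
      apply Fin.ext
      simp; omega
    · rw [map_add, Finsupp.degree_single, Finsupp.degree_single]; omega
    · rw [yd_add, yd_single, yd_single, if_neg (c := _ ∧ _) (t := m + (j - 1) - 1) (by simp)]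
      unfold pr
      simp only
      split_ifs with h1 h2 h2 <;> simp at * <;> omega
  · intro j
    unfold aF aN
    split_ifs <;> omega
  · intro j hj
    unfold fc aF aN
    rw [dif_neg hj, if_neg hj]
    exact ⟨rfl, rfl⟩

def EE (k : ℕ) : ℕ := ∏ i ∈ Finset.Ico (k+1) (n+1), aN m r i

lemma EE_succ (k : ℕ) (hk : k + 1 ≤ n) : EE n m r k = aN m r (k+1) * EE n m r (k+1) := by
  unfold EE
  rw [Finset.prod_eq_prod_Ico_succ_bot (by omega)]

lemma EE_zero : EE n m r 0 = ∏ j, aF n m r j := by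
  unfold aF
  rw [Fin.prod_univ_eq_prod_range (fun k => aN m r k) (n+1), Finset.range_eq_Ico,
    Finset.prod_eq_prod_Ico_succ_bot (by omega)]
  simp [EE, aN]

lemma EE_r : EE n m r r = 1 := by
  unfold EE
  apply Finset.prod_eq_one
  intro i hi
  rw [Finset.mem_Ico] at hi
  unfold aN
  rw [if_neg (by omega)]

def chi : MvPolynomial (Fin (n+1)) ℂ →ₐ[ℂ] Polynomial ℂ :=
  aeval (fun j => if 1 ≤ (j : ℕ) ∧ (j : ℕ) ≤ r then Polynomial.X ^ EE n m r j else
    if (j : ℕ) = r + 1 then Polynomial.X ^ EE n m r 0 else if (j : ℕ) = r + 2 then 1 else 0)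

def qq (j : {j : Fin (n+1) // tF n r j}) : Polynomial ℂ :=
  if (j.1 : ℕ) = r + 1 then Polynomial.X else if (j.1 : ℕ) = r + 2 then 1 else 0

theorem generic (hm : 1 ≤ m) (hr1 : 1 ≤ r) (hr : r + 2 ≤ n) :
    ∃ h : AA n r, phic n r (c0 n m r hr) h ≠ 0 ∧
      ∀ c : Fin r → MvPolynomial (Fin (n+1)) ℂ, (∀ i, (c i).IsHomogeneous (m + i)) →
        phic n r c h ≠ 0 → (II (tF n r) (fc n r c)).IsPrime ∧
      ringKrullDim (MvPolynomial (Fin (n+1)) ℂ ⧸ II (tF n r) (fc n r c)) =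
        ((n - r : ℕ) : WithBot ℕ∞) := by
  have h0 := FF_map n m r (c0 n m r hr) (c0_hom n m r hm hr)
  have h0' := funext h0
  obtain ⟨h, hh0, hh⟩ := family (tF n r) (FF n m r) (aF n m r)
    (by intro j; unfold aF aN; split_ifs <;> omega) (FF_hom n m r)
    (by
      intro j hj
      have hj' : r < (j : ℕ) := hj
      unfold FF aF aN
      rw [dif_neg (by omega), if_neg (by omega)]
      exact ⟨rfl, rfl⟩)
    ⟨r, by omega⟩ (qq n r) (phic n r (c0 n m r hr))
    (by rw [h0']; exact sur_c0 n m r hm hr)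
    (chi n m r)
    (by
      intro j hj
      rw [h0]
      have hj' : ¬ r < (j : ℕ) := hj
      unfold fc
      split_ifs with h
      · unfold c0
        rw [← one_mul (1 : ℂ), ← monomial_mul, ← X_pow_eq_monomial, ← X_pow_eq_monomial]
        simp only [map_sub, map_mul, map_pow, pow_one]
        have e1 : chi n m r (X ⟨r + 2, by omega⟩) = 1 := by
          simp [chi]
        have e2 : chi n m r (X (pr n r hr ⟨j - 1, by omega⟩)) = Polynomial.X ^ EE n m r (j - 1) := by
          unfold pr
          simp only
          split_ifs with h1
          · rw [h1]; simp [chi]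
          · simp only [chi, aeval_X]
            rw [if_pos (by omega)]
        have e3 : chi n m r (X ⟨(j : ℕ) - 1 + 1, by omega⟩) = Polynomial.X ^ EE n m r j := by
          simp only [chi, aeval_X]
          rw [if_pos (by omega)]
          congr 2; omega
        rw [e1, e2, e3, one_pow, mul_one, ← pow_mul, sub_eq_zero, EE_succ n m r (j - 1) (by omega)]
        have e4 : (j : ℕ) - 1 + 1 = j := by omega
        rw [e4, mul_comm]
        congr 2
        unfold aN
        rw [if_pos h]
      · simp only [chi, aeval_X]
        rw [if_neg h, if_neg (by omega), if_neg (by omega)])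
    (by
      simp only [chi, aeval_X]
      rw [if_pos (by omega), EE_r, pow_one])
    (by
      intro j
      have hj : r < (j.1 : ℕ) := j.2
      simp only [chi, aeval_X, qq]
      rw [if_neg (by omega), ← EE_zero]
      split_ifs <;> simp)
  refine ⟨h, hh0, ?_⟩
  intro c hc hne
  have h1 := hh (phic n r c) hne
  rw [funext (FF_map n m r c hc)] at h1
  refine ⟨h1.1, h1.2.trans ?_⟩
  have : Fintype.card {j : Fin (n+1) // tF n r j} = n - r := by
    rw [Fintype.card_subtype]
    have h2 : (Finset.univ.filter fun j : Fin (n+1) => tF n r j) = Finset.Ioi ⟨r, by omega⟩ := by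
      ext j
      simp [tF, Fin.lt_def]
    rw [h2, Fin.card_Ioi]
    simp
  rw [this]

end conc

set_option linter.unusedSectionVars false

lemma eval_hom_scale {σ : Type*} [Fintype σ] [DecidableEq σ] {e : ℕ} {p : MvPolynomial σ ℂ} (hp : p.IsHomogeneous e)
    (v : ℂ) (x : σ → ℂ) : eval (v • x) p = v ^ e * eval x p := by
  rw [eval_eq, eval_eq, Finset.mul_sum]
  refine Finset.sum_congr rfl fun μ hμ => ?_
  have h1 : μ.degree = e := deg_of_mem hp hμ
  simp only [Pi.smul_apply, smul_eq_mul, mul_pow, Finset.prod_mul_distrib]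
  rw [Finset.prod_pow_eq_pow_sum]
  have h2 : ∑ i ∈ μ.support, μ i = e := h1
  rw [h2]
  ring

lemma eval_supp {n : ℕ} {p : MvPolynomial (Fin (n+1)) ℂ}
    (hp : p ∈ supported ℂ {j : Fin (n + 1) | j ≠ 0}) (x y : Fin (n+1) → ℂ)
    (h : ∀ j, j ≠ 0 → x j = y j) : eval x p = eval y p := by
  rw [mem_supported] at hp
  refine eval₂Hom_congr' rfl ?_ rfl
  intro i hi _
  exact h i (hp hi)

lemma line_eval {n r m d : ℕ} (c : Fin r → MvPolynomial (Fin (n+1)) ℂ)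
    (hc : ∀ i, (c i).IsHomogeneous (m+i))
    (hs : ∀ i, c i ∈ supported ℂ {j : Fin (n + 1) | j ≠ 0}) (x : Fin (n+1) → ℂ) (hx : x 0 = 0)
    (u v : ℂ) : eval (u • (Pi.single 0 1 : Fin (n + 1) → ℂ) + v • x)
      (∑ i : Fin r, X 0 ^ (d - (m + (i : ℕ))) * c i) =
      ∑ i : Fin r, u ^ (d - (m + (i : ℕ))) * (v ^ (m + (i : ℕ)) * eval x (c i)) := by
  rw [map_sum]
  refine Finset.sum_congr rfl fun i _ => ?_
  rw [map_mul, map_pow, eval_X, ← eval_hom_scale (hc i)]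
  congr 1
  · simp [hx]
  · apply eval_supp (hs i)
    intro j hj
    simp [Pi.single_eq_of_ne hj]

lemma line_set {n r m d : ℕ} (hr : r + m = d + 1) (hrn : r ≤ n) (c : Fin r → MvPolynomial (Fin (n+1)) ℂ)
    (hc : ∀ i, (c i).IsHomogeneous (m+i))
    (hs : ∀ i, c i ∈ supported ℂ {j : Fin (n + 1) | j ≠ 0}) :
    {x : Fin (n + 1) → ℂ | x 0 = 0 ∧ ∀ u v : ℂ, eval (u • (Pi.single 0 1 : Fin (n + 1) → ℂ) + v • x)
      (∑ i : Fin r, X 0 ^ (d - (m + (i : ℕ))) * c i) = 0} = zeroLocus ℂ (II (tF n r) (fc n r c)) := by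
  have key : ∀ x : Fin (n+1) → ℂ, x ∈ zeroLocus ℂ (II (tF n r) (fc n r c)) ↔
      x 0 = 0 ∧ ∀ i, eval x (c i) = 0 := by
    intro x
    rw [II, zeroLocus_span]
    simp only [Set.mem_ofPred_eq, Set.forall_mem_range, aeval_eq_eval]
    constructor
    · intro h
      constructor
      · have := h ⟨0, by simp [tF]⟩
        simpa [fc] using this
      · intro i
        have := h ⟨⟨i+1, by omega⟩, by simp [tF]⟩
        unfold fc at this
        rw [dif_pos (by simp)] at this
        simpa using this
    · rintro ⟨h0, h1⟩ ⟨j, hj⟩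
      simp only [tF, not_lt] at hj
      unfold fc
      split_ifs with h
      · exact h1 _
      · have h' : ¬ (1 ≤ (j:ℕ) ∧ (j:ℕ) ≤ r) := h
        have : j = 0 := by apply Fin.ext; rw [Fin.val_zero]; omega
        subst this
        simpa using h0
  ext x
  rw [key]
  constructor
  · rintro ⟨h0, h⟩
    refine ⟨h0, ?_⟩
    have hP : (∑ i : Fin r, Polynomial.C (eval x (c i)) * Polynomial.X ^ (d - (m + (i : ℕ)))) = 0 := by
      apply Polynomial.funext
      intro u
      have := h u 1
      rw [line_eval c hc hs x h0] at this
      simp only [Polynomial.eval_finsetSum, Polynomial.eval_mul, Polynomial.eval_C, Polynomial.eval_pow,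
        Polynomial.eval_X, Polynomial.eval_zero]
      rw [← this]
      refine Finset.sum_congr rfl fun i _ => ?_
      rw [one_pow]; ring
    intro i
    have := congrArg (fun p => p.coeff (d - (m + (i : ℕ)))) hP
    simp only [Polynomial.finsetSum_coeff, Polynomial.coeff_C_mul_X_pow, Polynomial.coeff_zero] at this
    rw [Finset.sum_eq_single i] at this
    · simpa using this
    · intro j _ hj
      rw [if_neg]
      intro h'
      apply hj
      apply Fin.ext
      omega
    · simp
  · rintro ⟨h0, h⟩
    refine ⟨h0, fun u v => ?_⟩
    rw [line_eval c hc hs x h0]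
    exact Finset.sum_eq_zero fun i _ => by rw [h i]; simp


/-- Let `Y = {∑_{i=m}^{d} x₀^{d-i} fᵢ = 0} ⊆ ℙⁿ` with the `fᵢ` general
homogeneous forms of degree `i` in `x₁,…,xₙ`, so that `y = [1:0:…:0]` is the only singular
point, of multiplicity `m`. If `d < m + n − 2`, then the variety `Σ` of lines in `Y` through
`y` (viewed inside the hyperplane `{x₀ = 0}`, as a cone) is irreducible of projective
dimension `m + n − 2 − d ≥ 1` (cone dimension `m + n − 1 − d`). -/
theorem stmt14 (n m d : ℕ) (hm : 1 ≤ m) (hmd : m ≤ d) (hn : 2 ≤ n) (hd : d < m + n - 2) :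
    ∃ U : Set (Π _i : Fin (d + 1 - m),
        ((homogeneousSubmodule (Fin (n + 1)) ℂ (m + (_i : ℕ))) ⊓
          (Subalgebra.toSubmodule (supported ℂ {j : Fin (n + 1) | j ≠ 0})) :
            Submodule ℂ (MvPolynomial (Fin (n + 1)) ℂ))),
      IsZariskiOpen U ∧ U.Nonempty ∧
      ∀ c ∈ U,
        AlgIrreducible {x : Fin (n + 1) → ℂ | x 0 = 0 ∧ ∀ u v : ℂ,
            eval (u • (Pi.single 0 1 : Fin (n + 1) → ℂ) + v • x)
              (∑ i : Fin (d + 1 - m),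
                X 0 ^ (d - (m + (i : ℕ))) * ((c i : MvPolynomial (Fin (n + 1)) ℂ))) = 0} ∧
        algDim {x : Fin (n + 1) → ℂ | x 0 = 0 ∧ ∀ u v : ℂ,
            eval (u • (Pi.single 0 1 : Fin (n + 1) → ℂ) + v • x)
              (∑ i : Fin (d + 1 - m),
                X 0 ^ (d - (m + (i : ℕ))) * ((c i : MvPolynomial (Fin (n + 1)) ℂ))) = 0}
          = ((m + n - 1 - d : ℕ) : WithBot ℕ∞) := by
  have hr : (d + 1 - m) + 2 ≤ n := by omega
  obtain ⟨h, h0, hh⟩ := generic n m (d + 1 - m) hm (by omega) hr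
  refine ⟨{c | phic n (d + 1 - m) (fun i => (c i).1) h ≠ 0}, ?_, ?_, ?_⟩
  · refine ⟨{fun c => phic n (d + 1 - m) (fun i => (c i).1) h}, ?_, ?_⟩
    · rintro g rfl
      obtain ⟨k, f, hf, q, rfl⟩ := exists_fin_rename h
      refine ⟨k, fun i => (lcoeff ℂ (f i).2) ∘ₗ (Submodule.subtype _) ∘ₗ LinearMap.proj (f i).1, q, ?_⟩
      intro c
      simp only [phic, aeval_rename, aeval_eq_eval]
      rfl
    · ext c
      simp
  · exact ⟨fun i => ⟨c0 n m _ hr i, c0_hom n m _ hm hr i, c0_supp n m _ hr i⟩, h0⟩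
  · intro c hcU
    have hc1 : ∀ i, ((c i).1).IsHomogeneous (m + i) := fun i => (c i).2.1
    have hc2 : ∀ i, (c i).1 ∈ supported ℂ {j : Fin (n + 1) | j ≠ 0} := fun i => (c i).2.2
    obtain ⟨hp, hdim⟩ := hh (fun i => (c i).1) hc1 hcU
    have hset := line_set (n := n) (r := d + 1 - m) (m := m) (d := d) (by omega) (by omega)
      (fun i => (c i).1) hc1 hc2
    rw [hset]
    refine ⟨algIrr_of_prime _ hp, ?_⟩
    rw [algDim_zeroLocus, hdim]
    have hnr : n - (d + 1 - m) = m + n - 1 - d := by omega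
    rw [hnr]
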